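/- arXiv:1608.06316 — 6 statements merged into one kernel-verified Lean document; each statement's English description precedes it below -/
import Mathlib

section
/- Let α, β be positive irrationals and let G_α = {m + nα : m, n ∈ ℤ} and G_β = {m + nβ : m, n ∈ ℤ}, viewed as additive subgroups of ℝ. Then 𝒜_α and 𝒜_β are isometrically isomorphic if and only if there is a group isomorphism from G_α onto G_β which maps the positive elements of G_α onto the positive elements of G_β. -/
/-!
Write `X = 𝕋²` and call `m + α n` the height of the character `χ_{m,n}`, so that the heights are
exactly the elements of `G_α`, and `ℤ² ≃ G_α` because `α` is irrational (`heightEquiv`).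

**From an ordered group isomorphism to an algebra isomorphism.** An isomorphism `G_α ≃ G_β` is an
automorphism `N` of the lattice `ℤ²` of characters, which is dual to an automorphism of the group
`X`. Composition with the latter preserves Haar measure and moves the Fourier coefficient of index
`k` to the index `N k`, hence carries `𝒜_α` onto `𝒜_β` when `N` respects the sign of the height.

**From an algebra isomorphism to an ordered group isomorphism.** Every point of `X` is a peak point
of `𝒜_β`, already for polynomials in `z` and `w`. It follows that an isometric isomorphism
`Φ : 𝒜_α → 𝒜_β` has the form `f ↦ f ∘ h` with `h : X → X` a homeomorphism (`isom_exists_point`,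
`isom_exists_map`). By covering space theory every continuous map `X → 𝕋` equals `χ_k exp(i v)`
with `v` real and continuous (`exists_char_mul_exp`), so `h` induces a map `M : ℤ² → ℤ²` by
`χ_k ∘ h = χ_{M k} exp(i v)`. The decisive point is that `χ_k exp(i v) ∈ 𝒜_β` forces `k` to have
nonnegative height (`height_nonneg`): since imaginary parts of elements of `𝒜_β` are uniformly
dense in the real continuous functions, some `a ∈ 𝒜_β` has `|v - Im a| < 1`; if `k` had negative
height, the `k`-th Fourier coefficient of `χ_k exp(i v - a) ∈ 𝒜_β` would vanish, while it is the
integral of `exp(i v - a)`, whose real part is positive. Applied to `χ_k ∘ h = Φ χ_k` this shows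
that `M` preserves positivity; applied to the constant `1` it shows that distinct characters are
not homotopic, which makes `M` invertible.

The products used above lie in `𝒜_α` because `𝒜_α` is a closed subalgebra (`mul_mem`), a fact that
rests on the `L¹`-density of trigonometric polynomials with nonnegative heights
(`exists_approx_L1`).
-/

open MeasureTheory

noncomputable section

/-- Borel measurable structure on the circle group `𝕋`. -/
instance : MeasurableSpace Circle := borel Circle
instance : BorelSpace Circle := ⟨rfl⟩

/-- The normalized Haar (Lebesgue) measure `μ` on the 2-torus `𝕋² = 𝕋 × 𝕋`. -/
def haarT2 : Measure (Circle × Circle) :=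
  Measure.haarMeasure ⟨⟨Set.univ, isCompact_univ⟩, by simp⟩

/-- The character `χ_{m,n}` on the 2-torus, `χ_{m,n}(z,w) = z^m * w^n`. -/
def chi (m n : ℤ) : C(Circle × Circle, ℂ) :=
  ⟨fun p => ((p.1 ^ m : Circle) : ℂ) * ((p.2 ^ n : Circle) : ℂ), by
    have h1 : Continuous fun p : Circle × Circle => p.1 ^ m :=
      (continuous_zpow m).comp continuous_fst
    have h2 : Continuous fun p : Circle × Circle => p.2 ^ n :=
      (continuous_zpow n).comp continuous_snd
    have hc : Continuous ((↑) : Circle → ℂ) := continuous_induced_dom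
    exact (hc.comp h1).mul (hc.comp h2)⟩

/-- The Fourier coefficient `f̂(m,n) = ∫_{𝕋²} f(z,w) z^{-m} w^{-n} dμ(z,w)`. -/
def fourierCoef (f : C(Circle × Circle, ℂ)) (m n : ℤ) : ℂ :=
  ∫ p, f p * chi (-m) (-n) p ∂haarT2

/-- The uniform algebra `𝒜_α ⊆ C(𝕋²,ℂ)`, as a set: those continuous functions whose
Fourier coefficients `f̂(m,n)` vanish whenever `m + α n < 0`. -/
def Aset (α : ℝ) : Set C(Circle × Circle, ℂ) :=
  {f | ∀ m n : ℤ, (m : ℝ) + α * n < 0 → fourierCoef f m n = 0}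

/-- `Φ : 𝒜_α → 𝒜_β` is an isometric algebra isomorphism: a bijection which is additive,
`ℂ`-homogeneous and multiplicative (the algebraic operations being those inherited from
the ambient algebra `C(𝕋²,ℂ)`), and isometric for the supremum norm. -/
def IsIsomIso (α β : ℝ) (Φ : ↥(Aset α) → ↥(Aset β)) : Prop :=
  Function.Bijective Φ ∧
  (∀ f g h : ↥(Aset α), (h : C(Circle × Circle, ℂ)) = ↑f + ↑g →
    (↑(Φ h) : C(Circle × Circle, ℂ)) = ↑(Φ f) + ↑(Φ g)) ∧
  (∀ (c : ℂ) (f g : ↥(Aset α)),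
    (g : C(Circle × Circle, ℂ)) = c • (f : C(Circle × Circle, ℂ)) →
    (↑(Φ g) : C(Circle × Circle, ℂ)) = c • (↑(Φ f) : C(Circle × Circle, ℂ))) ∧
  (∀ f g h : ↥(Aset α), (h : C(Circle × Circle, ℂ)) = ↑f * ↑g →
    (↑(Φ h) : C(Circle × Circle, ℂ)) = ↑(Φ f) * ↑(Φ g)) ∧
  (∀ f : ↥(Aset α), ‖(↑(Φ f) : C(Circle × Circle, ℂ))‖ = ‖(↑f : C(Circle × Circle, ℂ))‖)

/-- The dense additive subgroup `G_α = {m + nα : m, n ∈ ℤ}` of `ℝ`. -/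
def Gsub (α : ℝ) : AddSubgroup ℝ where
  carrier := {x | ∃ m n : ℤ, x = (m : ℝ) + n * α}
  zero_mem' := ⟨0, 0, by simp⟩
  add_mem' := by
    rintro x y ⟨m, n, rfl⟩ ⟨m', n', rfl⟩
    exact ⟨m + m', n + n', by push_cast; ring⟩
  neg_mem' := by
    rintro x ⟨m, n, rfl⟩
    exact ⟨-m, -n, by push_cast; ring⟩

namespace TorusAlgebra

/-! ### Fourier coefficients and the subspace `𝒜_α` -/

instance : haarT2.IsHaarMeasure := by unfold haarT2; infer_instance

instance : IsProbabilityMeasure haarT2 :=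
  ⟨Measure.haarMeasure_self (K₀ := (⟨⟨Set.univ, isCompact_univ⟩, by simp⟩ :
    TopologicalSpace.PositiveCompacts (Circle × Circle)))⟩

/-- Continuous functions on the torus are integrable. -/
lemma integrable_cm {E : Type*} [NormedAddCommGroup E] {f : Circle × Circle → E}
    (hf : Continuous f) : Integrable f haarT2 :=
  hf.integrable_of_hasCompactSupport (HasCompactSupport.of_compactSpace f)

lemma chi_apply (m n : ℤ) (p : Circle × Circle) :
    chi m n p = ((p.1 ^ m * p.2 ^ n : Circle) : ℂ) := by
  simp [chi]

lemma chi_zero : chi 0 0 = 1 := by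
  ext p; simp [chi_apply]

lemma chi_mul (a b m n : ℤ) : chi a b * chi m n = chi (a + m) (b + n) := by
  ext p
  simp only [ContinuousMap.mul_apply, chi_apply, ← Circle.coe_mul]
  rw [zpow_add, zpow_add, mul_mul_mul_comm]

lemma star_chi (m n : ℤ) : star (chi m n) = chi (-m) (-n) := by
  ext p
  simp [chi_apply, Circle.coe_inv_eq_conj, -Circle.coe_inv]

lemma exists_chi_eq_neg_one {m n : ℤ} (h : ¬(m = 0 ∧ n = 0)) :
    ∃ q : Circle × Circle, q.1 ^ m * q.2 ^ n = -1 := by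
  have key : ∀ k : ℤ, k ≠ 0 → ∃ z : Circle, z ^ k = -1 := fun k hk =>
    ⟨Circle.exp (Real.pi / k), by
      have hk' : (k : ℝ) ≠ 0 := by exact_mod_cast hk
      rw [← Circle.exp_zsmul, zsmul_eq_mul, mul_div_cancel₀ _ hk']
      exact Circle.ext (by simp)⟩
  by_cases hm : m = 0
  · obtain ⟨z, hz⟩ := key n (fun hn => h ⟨hm, hn⟩)
    exact ⟨(1, z), by simp [hz]⟩
  · obtain ⟨z, hz⟩ := key m hm
    exact ⟨(z, 1), by simp [hz]⟩

lemma integral_chi (m n : ℤ) :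
    ∫ p, chi m n p ∂haarT2 = if m = 0 ∧ n = 0 then 1 else 0 := by
  split_ifs with h
  · simp [h.1, h.2, chi_zero]
  · -- translating by a point where the character is `-1` changes the sign of the integral
    obtain ⟨q, hq⟩ := exists_chi_eq_neg_one h
    have h1 := integral_mul_left_eq_self (μ := haarT2) (fun p => chi m n p) q
    have h2 : ∀ p, chi m n (q * p) = - chi m n p := fun p => by
      have : ((q * p).1 ^ m * (q * p).2 ^ n : Circle) = -1 * (p.1 ^ m * p.2 ^ n) := by
        rw [← hq, Prod.fst_mul, Prod.snd_mul, mul_zpow, mul_zpow, mul_mul_mul_comm]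
      rw [chi_apply, chi_apply, this]
      simp
    simp only [h2, integral_neg] at h1
    exact CharZero.neg_eq_self_iff.mp h1

/-- The Fourier coefficient of index `(m, n)` as a bounded linear functional. -/
def coefL (m n : ℤ) : C(Circle × Circle, ℂ) →L[ℂ] ℂ :=
  LinearMap.mkContinuous
    { toFun := fun f => fourierCoef f m n
      map_add' := fun f g => by
        simp only [fourierCoef, ContinuousMap.add_apply, add_mul]
        exact integral_add (integrable_cm (by fun_prop)) (integrable_cm (by fun_prop))
      map_smul' := fun c f => by
        simp only [fourierCoef, ContinuousMap.smul_apply, smul_eq_mul, mul_assoc,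
          RingHom.id_apply]
        exact integral_const_mul _ _ } 1 (fun f => by
      have := norm_integral_le_of_norm_le_const (μ := haarT2) (C := ‖f‖)
        (f := fun p => f p * chi (-m) (-n) p)
        (Filter.Eventually.of_forall fun p => by
          rw [norm_mul, chi_apply, Circle.norm_coe, mul_one]; exact f.norm_coe_le_norm p)
      simpa [fourierCoef] using this)

lemma coefL_apply (m n : ℤ) (f : C(Circle × Circle, ℂ)) : coefL m n f = fourierCoef f m n := rfl

lemma fourierCoef_mul_chi (f : C(Circle × Circle, ℂ)) (a b m n : ℤ) :
    fourierCoef (f * chi a b) m n = fourierCoef f (m - a) (n - b) := by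
  unfold fourierCoef
  congr 1; ext p
  rw [ContinuousMap.mul_apply, mul_assoc, ← ContinuousMap.mul_apply (chi a b), chi_mul]
  congr 3 <;> ring

lemma fourierCoef_one (m n : ℤ) : fourierCoef 1 m n = if m = 0 ∧ n = 0 then 1 else 0 := by
  unfold fourierCoef
  simp [integral_chi]

/-- `𝒜_α` as a linear subspace of `C(𝕋², ℂ)`. -/
def Asub (α : ℝ) : Submodule ℂ C(Circle × Circle, ℂ) where
  carrier := Aset α
  zero_mem' := fun m n _ => map_zero (coefL m n)
  add_mem' := fun {f g} hf hg m n h => by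
    rw [← coefL_apply, map_add, coefL_apply, coefL_apply, hf m n h, hg m n h, add_zero]
  smul_mem' := fun c f hf m n h => by
    rw [← coefL_apply, map_smul, coefL_apply, hf m n h, smul_zero]

lemma mem_Asub {α : ℝ} {f : C(Circle × Circle, ℂ)} : f ∈ Asub α ↔ f ∈ Aset α := Iff.rfl

lemma isClosed_Asub (α : ℝ) : IsClosed (Asub α : Set C(Circle × Circle, ℂ)) := by
  have : (Asub α : Set C(Circle × Circle, ℂ)) =
      ⋂ m : ℤ, ⋂ n : ℤ, ⋂ _ : (m : ℝ) + α * n < 0, {f | coefL m n f = 0} := by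
    ext f; simp only [Set.mem_iInter]; rfl
  rw [this]
  exact isClosed_iInter fun m => isClosed_iInter fun n => isClosed_iInter fun _ =>
    isClosed_eq (coefL m n).continuous continuous_const

lemma mul_chi_mem {α : ℝ} {f : C(Circle × Circle, ℂ)} (hf : f ∈ Asub α) {a b : ℤ}
    (h : 0 ≤ (a : ℝ) + α * b) : f * chi a b ∈ Asub α := fun m n hmn => by
  rw [fourierCoef_mul_chi]
  exact hf _ _ (by push_cast; linarith)

lemma one_mem (α : ℝ) : (1 : C(Circle × Circle, ℂ)) ∈ Asub α := fun m n h => by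
  rw [fourierCoef_one, if_neg]
  rintro ⟨rfl, rfl⟩
  simp at h

lemma chi_mem {α : ℝ} {a b : ℤ} (h : 0 ≤ (a : ℝ) + α * b) : chi a b ∈ Asub α := by
  simpa using mul_chi_mem (one_mem α) h

/-! ### Trigonometric polynomials -/

/-- The trigonometric polynomials on `𝕋²`, that is, the linear span of the characters. -/
def trigPoly : StarSubalgebra ℂ C(Circle × Circle, ℂ) where
  carrier := Submodule.span ℂ (Set.range fun k : ℤ × ℤ => chi k.1 k.2)
  add_mem' := Submodule.add_mem _
  mul_mem' := fun {f g} hf hg => by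
    refine Submodule.span_induction₂ (p := fun f g _ _ => f * g ∈ Submodule.span ℂ
      (Set.range fun k : ℤ × ℤ => chi k.1 k.2)) ?_ ?_ ?_ ?_ ?_ ?_ ?_ hf hg
    · rintro _ _ ⟨k, rfl⟩ ⟨l, rfl⟩
      exact Submodule.subset_span ⟨k + l, (chi_mul _ _ _ _).symm⟩
    · intro g _; simp
    · intro g _; simp
    · intro f g h _ _ _ h1 h2; rw [add_mul]; exact Submodule.add_mem _ h1 h2
    · intro f g h _ _ _ h1 h2; rw [mul_add]; exact Submodule.add_mem _ h1 h2
    · intro c f g _ _ h; rw [smul_mul_assoc]; exact Submodule.smul_mem _ _ h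
    · intro c f g _ _ h; rw [mul_smul_comm]; exact Submodule.smul_mem _ _ h
  algebraMap_mem' := fun c => by
    rw [Algebra.algebraMap_eq_smul_one, ← chi_zero]
    exact Submodule.smul_mem _ _ (Submodule.subset_span ⟨(0, 0), rfl⟩)
  star_mem' := fun {f} hf => by
    refine Submodule.span_induction (p := fun f _ => star f ∈ Submodule.span ℂ
      (Set.range fun k : ℤ × ℤ => chi k.1 k.2)) ?_ ?_ ?_ ?_ hf
    · rintro _ ⟨k, rfl⟩
      exact Submodule.subset_span ⟨-k, (star_chi _ _).symm⟩
    · simp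
    · intro f g _ _ h1 h2; rw [star_add]; exact Submodule.add_mem _ h1 h2
    · intro c f _ h; rw [star_smul]; exact Submodule.smul_mem _ _ h

lemma trigPoly_dense : trigPoly.topologicalClosure = ⊤ := by
  apply ContinuousMap.starSubalgebra_topologicalClosure_eq_top_of_separatesPoints
  have hmem : ∀ m n, chi m n ∈ trigPoly := fun m n => Submodule.subset_span ⟨(m, n), rfl⟩
  rintro p q hpq
  by_cases h : p.1 = q.1
  · refine ⟨_, ⟨chi 0 1, hmem 0 1, rfl⟩, ?_⟩
    simpa [chi_apply, Circle.ext_iff] using fun h' => hpq (Prod.ext h (Circle.ext h'))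
  · refine ⟨_, ⟨chi 1 0, hmem 1 0, rfl⟩, ?_⟩
    simpa [chi_apply] using fun h' => h (Circle.ext h')

/-- The trigonometric polynomials with all frequencies of nonnegative height `m + α n`. -/
def posPoly (α : ℝ) : Submodule ℂ C(Circle × Circle, ℂ) :=
  Submodule.span ℂ {f | ∃ m n : ℤ, 0 ≤ (m : ℝ) + α * n ∧ f = chi m n}

/-- The trigonometric polynomials with all frequencies of negative height `m + α n`. -/
def negPoly (α : ℝ) : Submodule ℂ C(Circle × Circle, ℂ) :=
  Submodule.span ℂ {f | ∃ m n : ℤ, (m : ℝ) + α * n < 0 ∧ f = chi m n}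

lemma posPoly_le (α : ℝ) : posPoly α ≤ Asub α :=
  Submodule.span_le.mpr (by rintro _ ⟨m, n, h, rfl⟩; exact chi_mem h)

lemma exists_approx (α : ℝ) (g : C(Circle × Circle, ℂ)) {ε : ℝ} (hε : 0 < ε) :
    ∃ a ∈ posPoly α, ∃ b ∈ negPoly α, ‖g - (a + b)‖ < ε := by
  have hg : g ∈ closure (trigPoly : Set C(Circle × Circle, ℂ)) := by
    have : g ∈ trigPoly.topologicalClosure := by rw [trigPoly_dense]; trivial
    simpa [← StarSubalgebra.topologicalClosure_coe] using this
  obtain ⟨q, hq, hgq⟩ := Metric.mem_closure_iff.mp hg ε hε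
  have hle : Submodule.span ℂ (Set.range fun k : ℤ × ℤ => chi k.1 k.2) ≤
      posPoly α ⊔ negPoly α := by
    rw [Submodule.span_le]
    rintro _ ⟨k, rfl⟩
    rcases le_or_gt 0 ((k.1 : ℝ) + α * k.2) with h | h
    · exact Submodule.mem_sup_left (Submodule.subset_span ⟨_, _, h, rfl⟩)
    · exact Submodule.mem_sup_right (Submodule.subset_span ⟨_, _, h, rfl⟩)
  obtain ⟨a, ha, b, hb, rfl⟩ := Submodule.mem_sup.mp (hle hq)
  exact ⟨a, ha, b, hb, by rwa [← dist_eq_norm]⟩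

lemma star_negPoly {α : ℝ} {b : C(Circle × Circle, ℂ)} (hb : b ∈ negPoly α) :
    star b ∈ posPoly α := by
  refine Submodule.span_induction (p := fun f _ => star f ∈ posPoly α) ?_ ?_ ?_ ?_ hb
  · rintro _ ⟨m, n, h, rfl⟩
    exact Submodule.subset_span ⟨-m, -n, by push_cast; linarith, star_chi _ _⟩
  · simp
  · intro f g _ _ h1 h2; rw [star_add]; exact Submodule.add_mem _ h1 h2
  · intro c f _ h; rw [star_smul]; exact Submodule.smul_mem _ _ h

lemma integral_mul_star_eq_zero {α : ℝ} {f b : C(Circle × Circle, ℂ)} (hf : f ∈ Asub α)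
    (hb : b ∈ negPoly α) : ∫ p, f p * star (b p) ∂haarT2 = 0 := by
  refine Submodule.span_induction (p := fun b _ => ∫ p, f p * star (b p) ∂haarT2 = 0)
    ?_ ?_ ?_ ?_ hb
  · rintro _ ⟨m, n, h, rfl⟩
    have := hf m n h
    rw [fourierCoef, ← star_chi] at this
    exact this
  · simp
  · intro g h _ _ h1 h2
    simp only [ContinuousMap.add_apply, star_add, mul_add]
    rw [integral_add (integrable_cm (by fun_prop)) (integrable_cm (by fun_prop)), h1, h2, add_zero]
  · intro c g _ h
    simp only [ContinuousMap.smul_apply, star_smul, mul_smul_comm]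
    rw [integral_smul, h, smul_zero]

/-- Polynomials with frequencies of nonnegative height are `L¹`-dense in `𝒜_α`. The polynomial is
the nonnegative part of a uniform approximation: discarding the negative part, which is orthogonal
to `𝒜_α`, does not increase the `L²` distance. -/
lemma exists_approx_L1 {α : ℝ} {g : C(Circle × Circle, ℂ)} (hg : g ∈ Asub α) {ε : ℝ}
    (hε : 0 < ε) : ∃ a ∈ posPoly α, ∫ p, ‖(g - a) p‖ ∂haarT2 ≤ ε := by
  obtain ⟨a, ha, b, hb, hab⟩ := exists_approx α g hε
  refine ⟨a, ha, ?_⟩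
  set h := g - a with hdef
  have hh : h ∈ Asub α := Submodule.sub_mem _ hg (posPoly_le α ha)
  have horth := integral_mul_star_eq_zero hh hb
  have hre : ∫ p, (h p * star (b p)).re ∂haarT2 = 0 := by
    have := integral_re (𝕜 := ℂ) (μ := haarT2) (f := fun p => h p * star (b p))
      (integrable_cm (by fun_prop))
    simp only [RCLike.re_to_complex] at this
    rw [this, horth]; rfl
  -- `‖h‖ ≤ (ε + ‖h‖² / ε) / 2` and `‖h‖² ≤ ‖h - b‖² + 2 Re (h b̄)`
  have hpt : ∀ p, ‖h p‖ ≤ ε + (h p * star (b p)).re / ε := by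
    intro p
    have h1 : ‖h p - b p‖ ≤ ε := by
      have := (h - b).norm_coe_le_norm p
      have e : h - b = g - (a + b) := by rw [hdef]; abel
      rw [e] at this
      simpa [hdef, sub_sub] using this.trans hab.le
    have h2 : ‖h p - b p‖ ^ 2 = ‖h p‖ ^ 2 + ‖b p‖ ^ 2 - 2 * (h p * star (b p)).re := by
      simp only [← Complex.normSq_eq_norm_sq]
      rw [Complex.normSq_sub]; rfl
    have h3 : ‖h p - b p‖ ^ 2 ≤ ε ^ 2 := by gcongr
    rw [← sub_le_iff_le_add', le_div_iff₀ hε]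
    nlinarith [sq_nonneg (‖h p‖ - ε), sq_nonneg ‖b p‖]
  calc ∫ p, ‖h p‖ ∂haarT2 ≤ ∫ p, (ε + (h p * star (b p)).re / ε) ∂haarT2 :=
        integral_mono (integrable_cm (by fun_prop)) (integrable_cm (by fun_prop)) hpt
    _ = ε := by
        rw [integral_add (integrable_cm (by fun_prop)) (integrable_cm (by fun_prop)),
          integral_div, hre]
        simp

lemma mul_posPoly_mem {α : ℝ} {f a : C(Circle × Circle, ℂ)} (hf : f ∈ Asub α)
    (ha : a ∈ posPoly α) : f * a ∈ Asub α := by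
  refine Submodule.span_induction (p := fun a _ => f * a ∈ Asub α) ?_ ?_ ?_ ?_ ha
  · rintro _ ⟨m, n, h, rfl⟩; exact mul_chi_mem hf h
  · simp
  · intro g h _ _ h1 h2; rw [mul_add]; exact Submodule.add_mem _ h1 h2
  · intro c g _ h; rw [mul_smul_comm]; exact Submodule.smul_mem _ _ h

/-- `𝒜_α` is closed under multiplication: the Fourier coefficients of `f g` are limits of those of
`f a` with `a` a trigonometric polynomial of nonnegative heights, `L¹`-close to `g`. -/
lemma mul_mem {α : ℝ} {f g : C(Circle × Circle, ℂ)} (hf : f ∈ Asub α) (hg : g ∈ Asub α) :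
    f * g ∈ Asub α := by
  intro m n hmn
  rw [← norm_le_zero_iff]
  refine le_of_forall_pos_le_add fun ε hε => ?_
  have hf1 : 0 < ‖f‖ + 1 := by positivity
  obtain ⟨a, ha, hga⟩ := exists_approx_L1 hg (div_pos hε hf1)
  have h0 : fourierCoef (f * g) m n = fourierCoef (f * (g - a)) m n := by
    rw [← coefL_apply, ← coefL_apply, mul_sub, map_sub, coefL_apply m n (f * a),
      mul_posPoly_mem hf ha m n hmn, sub_zero]
  rw [h0, zero_add]
  calc ‖fourierCoef (f * (g - a)) m n‖
      ≤ ∫ p, ‖(f * (g - a)) p * chi (-m) (-n) p‖ ∂haarT2 := norm_integral_le_integral_norm _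
    _ ≤ ∫ p, (‖f‖ + 1) * ‖(g - a) p‖ ∂haarT2 := by
        refine integral_mono (integrable_cm (by fun_prop)) (integrable_cm (by fun_prop)) ?_
        intro p
        simp only [norm_mul, chi_apply, Circle.norm_coe, mul_one, ContinuousMap.mul_apply]
        gcongr
        linarith [f.norm_coe_le_norm p]
    _ ≤ ε := by
        rw [integral_const_mul]
        calc _ ≤ (‖f‖ + 1) * (ε / (‖f‖ + 1)) := by gcongr
          _ = ε := by field_simp

lemma pow_mem {α : ℝ} {f : C(Circle × Circle, ℂ)} (hf : f ∈ Asub α) (n : ℕ) :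
    f ^ n ∈ Asub α := by
  induction n with
  | zero => rw [pow_zero]; exact one_mem α
  | succ n ih => rw [pow_succ]; exact mul_mem ih hf

/-! ### Unimodular elements of `𝒜_α` -/

lemma exp_mem {α : ℝ} {f : C(Circle × Circle, ℂ)} (hf : f ∈ Asub α) :
    NormedSpace.exp f ∈ Asub α := by
  refine (isClosed_Asub α).mem_of_tendsto (NormedSpace.exp_series_hasSum_exp' (𝕂 := ℂ) f)
    (Filter.Eventually.of_forall fun s => ?_)
  exact Submodule.sum_mem _ fun i _ => Submodule.smul_mem _ _ (pow_mem hf i)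

lemma exp_cm_apply (f : C(Circle × Circle, ℂ)) (p : Circle × Circle) :
    NormedSpace.exp f p = Complex.exp (f p) := by
  have := NormedSpace.map_exp (ContinuousMap.evalAlgHom ℂ ℂ p) (continuous_eval_const p) f
  rw [Complex.exp_eq_exp_ℂ]
  exact this

/-- `𝒜_α` is a Dirichlet algebra. Every real continuous function is uniformly within `1` of the imaginary part of an element
of `𝒜_α`. -/
lemma exists_im_approx (α : ℝ) (v : C(Circle × Circle, ℝ)) :
    ∃ a ∈ Asub α, ∀ p, |v p - (a p).im| < 1 := by
  obtain ⟨a, ha, b, hb, hab⟩ := exists_approx α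
    (⟨fun p => (v p : ℂ) * Complex.I, by fun_prop⟩ : C(Circle × Circle, ℂ)) one_pos
  refine ⟨a - star b, Submodule.sub_mem _ (posPoly_le α ha) (posPoly_le α (star_negPoly hb)),
    fun p => lt_of_le_of_lt ?_ hab⟩
  refine le_trans ?_ (ContinuousMap.norm_coe_le_norm _ p)
  refine le_trans (le_of_eq ?_) (Complex.abs_im_le_norm _)
  simp

/-- If an element of `𝒜_α` has values on the unit circle and homotopy class `(m, n)`, then the
height `m + α n` is nonnegative. Were it negative, then after multiplication by a suitable
`exp (-a)` with `a ∈ 𝒜_α` the `(m, n)`-th Fourier coefficient would still vanish, although it is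
the integral of a function with positive real part. -/
lemma height_nonneg {α : ℝ} {f : C(Circle × Circle, ℂ)} (hf : f ∈ Asub α) {m n : ℤ}
    {v : C(Circle × Circle, ℝ)}
    (h : ∀ p, f p = chi m n p * Circle.exp (v p)) : 0 ≤ (m : ℝ) + α * n := by
  by_contra! hneg
  obtain ⟨a, ha, hav⟩ := exists_im_approx α v
  have h0 := mul_mem hf (exp_mem (Submodule.neg_mem _ ha)) m n hneg
  have hval : ∀ p, (f * NormedSpace.exp (-a)) p * chi (-m) (-n) p =
      Complex.exp ((v p : ℂ) * Complex.I - a p) := by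
    intro p
    have e : chi m n p * chi (-m) (-n) p = 1 := by
      rw [← ContinuousMap.mul_apply, chi_mul]; simp [chi_zero]
    rw [ContinuousMap.mul_apply, exp_cm_apply, h, Circle.coe_exp, sub_eq_add_neg, Complex.exp_add,
      ContinuousMap.neg_apply]
    linear_combination (Complex.exp (v p * Complex.I) * Complex.exp (-a p)) * e
  have hcont : Continuous fun p => Complex.exp ((v p : ℂ) * Complex.I - a p) := by fun_prop
  rw [fourierCoef] at h0
  simp only [hval] at h0
  have hpos : ∀ p, 0 < (Complex.exp ((v p : ℂ) * Complex.I - a p)).re := by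
    intro p
    rw [Complex.exp_re]
    refine mul_pos (Real.exp_pos _) (Real.cos_pos_of_mem_Ioo ?_)
    have := abs_lt.mp (hav p)
    have hpi := Real.pi_gt_three
    simp only [Complex.sub_im, Complex.mul_I_im, Complex.ofReal_re]
    constructor <;> linarith
  have hint : 0 < ∫ p, (Complex.exp ((v p : ℂ) * Complex.I - a p)).re ∂haarT2 :=
    integral_pos_of_integrable_nonneg_nonzero (x := 1) (by fun_prop)
      (integrable_cm (by fun_prop)) (fun p => (hpos p).le) (hpos 1).ne'
  have hre := integral_re (𝕜 := ℂ) (μ := haarT2) (integrable_cm hcont)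
  simp only [RCLike.re_to_complex] at hre
  rw [hre, h0] at hint
  simp at hint

lemma height_injective {α : ℝ} (hirr : Irrational α) {m n a b : ℤ}
    (h : (m : ℝ) + α * n = a + α * b) : m = a ∧ n = b := by
  have hn : n = b := by
    by_contra hne
    have hne' : ((n - b : ℤ) : ℝ) ≠ 0 := by exact_mod_cast sub_ne_zero.mpr hne
    refine hirr ⟨((a - m : ℤ) : ℚ) / ((n - b : ℤ) : ℚ), ?_⟩
    rw [Rat.cast_div, Rat.cast_intCast, Rat.cast_intCast, div_eq_iff hne']
    push_cast; linarith
  subst hn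
  exact ⟨by exact_mod_cast add_right_cancel h, rfl⟩

/-- Distinct characters are not homotopic: otherwise `1 = χ exp(i v)` with `χ` their quotient, and
`height_nonneg` applies to `χ` and to its inverse. -/
lemma chi_homotopic_eq {α : ℝ} (hirr : Irrational α) {m n a b : ℤ} {v : C(Circle × Circle, ℝ)}
    (h : ∀ p, chi m n p = chi a b p * Circle.exp (v p)) : m = a ∧ n = b := by
  have e : ∀ p m n, chi m n p * chi (-m) (-n) p = 1 := fun p m n => by
    rw [← ContinuousMap.mul_apply, chi_mul]; simp [chi_zero]
  have e2 : ∀ p, (Circle.exp (v p) : ℂ) * Circle.exp (-v p) = 1 := fun p => by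
    rw [← Circle.coe_mul, ← Circle.exp_add]; simp
  have h1 : 0 ≤ ((a - m : ℤ) : ℝ) + α * (b - n : ℤ) :=
    height_nonneg (one_mem α) (v := v) fun p => by
      rw [sub_eq_add_neg, sub_eq_add_neg, ← chi_mul, ContinuousMap.mul_apply,
        ContinuousMap.one_apply]
      linear_combination chi (-m) (-n) p * h p - e p m n
  have h2 : 0 ≤ ((m - a : ℤ) : ℝ) + α * (n - b : ℤ) :=
    height_nonneg (one_mem α) (v := -v) fun p => by
      rw [sub_eq_add_neg, sub_eq_add_neg, ← chi_mul, ContinuousMap.mul_apply,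
        ContinuousMap.one_apply, h, ContinuousMap.neg_apply]
      linear_combination - e p a b - chi a b p * chi (-a) (-b) p * e2 p
  push_cast at h1 h2
  exact height_injective hirr (by linarith)

/-! ### Maps from the torus to the circle -/

/-- Every continuous map `𝕋² → 𝕋` is a character times the exponential of a real function: lift
to `ℝ²` through the universal covers. -/
lemma exists_char_mul_exp (F : C(Circle × Circle, Circle)) :
    ∃ (m n : ℤ) (v : C(Circle × Circle, ℝ)),
      ∀ p, F p = p.1 ^ m * p.2 ^ n * Circle.exp (v p) := by
  let E : C(ℝ × ℝ, Circle × Circle) := ⟨fun x => (Circle.exp x.1, Circle.exp x.2), by fun_prop⟩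
  have hE : Topology.IsQuotientMap E := by
    have hop := Circle.isCoveringMap_exp.isLocalHomeomorph.isOpenMap
    exact (hop.prodMap hop).isQuotientMap E.continuous
      (Circle.exp_surjective.prodMap Circle.exp_surjective)
  obtain ⟨t₀, ht₀⟩ := Circle.exp_surjective (F (E (0, 0)))
  obtain ⟨G, ⟨-, hG⟩, -⟩ := Circle.isCoveringMap_exp.existsUnique_continuousMap_lifts
    (F.comp E) (0, 0) t₀ ht₀
  have hG' : ∀ x, Circle.exp (G x) = F (E x) := fun x => congrFun hG x
  -- an increment of the lift over a period is an integer multiple of `2π`, constant in the point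
  have key : ∀ d : ℝ × ℝ, (∀ x, E (x + d) = E x) →
      ∃ m : ℤ, ∀ (k : ℤ) (x), G (x + k • d) = G x + k * (m * (2 * Real.pi)) := by
    intro d hd
    have hZ : ∀ x, ∃ m : ℤ, G (x + d) = G x + m * (2 * Real.pi) := fun x =>
      Circle.exp_eq_exp.mp (by rw [hG', hG', hd])
    choose M hM using hZ
    have hcont : Continuous M := by
      have hc : Continuous fun x => (M x : ℝ) := by
        have : (fun x => (M x : ℝ)) = fun x => (G (x + d) - G x) / (2 * Real.pi) := by
          ext x; rw [hM x]; field_simp; ring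
        rw [this]; fun_prop
      exact Int.isClosedEmbedding_coe_real.isInducing.continuous_iff.mpr hc
    have hstep : ∀ x, G (x + d) = G x + M 0 * (2 * Real.pi) := fun x => by
      rw [hM x, PreconnectedSpace.constant inferInstance hcont (x := x) (y := 0)]
    refine ⟨M 0, fun k => ?_⟩
    induction k using Int.induction_on with
    | zero => intro x; rw [zero_smul, add_zero]; simp
    | succ k ih =>
      intro x
      rw [add_smul, one_smul, ← add_assoc, hstep, ih]; push_cast; ring
    | pred k ih =>
      intro x
      have h1 := hstep (x + (-(k : ℤ) - 1) • d)
      rw [add_assoc, ← add_one_zsmul, sub_add_cancel, ih] at h1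
      push_cast at h1 ⊢; linarith
  obtain ⟨m, hm⟩ := key (2 * Real.pi, 0) fun x => by simp [E]
  obtain ⟨n, hn⟩ := key (0, 2 * Real.pi) fun x => by simp [E]
  let H : C(ℝ × ℝ, ℝ) := ⟨fun x => G x - m * x.1 - n * x.2, by fun_prop⟩
  have hH : Function.FactorsThrough H E := by
    intro x y hxy
    obtain ⟨k, hk⟩ := Circle.exp_eq_exp.mp (congrArg Prod.fst hxy)
    obtain ⟨l, hl⟩ := Circle.exp_eq_exp.mp (congrArg Prod.snd hxy)
    have e : x = y + k • (2 * Real.pi, (0 : ℝ)) + l • ((0 : ℝ), 2 * Real.pi) := by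
      ext <;> simp [hk, hl]
    simp only [H, ContinuousMap.coe_mk]
    rw [hk, hl, e, hn, hm]
    ring
  refine ⟨m, n, hE.lift H hH, fun p => ?_⟩
  obtain ⟨x, rfl⟩ := hE.surjective p
  have e : hE.lift H hH (E x) = H x := ContinuousMap.congr_fun (hE.lift_comp H hH) x
  rw [e, ← hG']
  have : G x = m * x.1 + n * x.2 + H x := by simp [H]
  rw [this, Circle.exp_add, Circle.exp_add]
  simp only [E, ContinuousMap.coe_mk, ← Circle.exp_zsmul, zsmul_eq_mul]

/-! ### An isometric isomorphism is a composition operator -/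

lemma eq_one_of_two_le_norm {z : ℂ} (hz : ‖z‖ ≤ 1) (h : 2 ≤ ‖1 + z‖) : z = 1 := by
  have h1 : Complex.normSq z ≤ 1 := by rw [Complex.normSq_eq_norm_sq]; nlinarith [norm_nonneg z]
  have h2 : 4 ≤ Complex.normSq (1 + z) := by rw [Complex.normSq_eq_norm_sq]; nlinarith
  rw [Complex.normSq_apply] at h1 h2
  simp only [Complex.add_re, Complex.one_re, Complex.add_im, Complex.one_im, zero_add] at h2
  have hre : z.re = 1 := by nlinarith [mul_self_nonneg z.im]
  have him : z.im = 0 := by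
    rw [hre] at h1
    exact mul_self_eq_zero.mp (le_antisymm (by linarith) (mul_self_nonneg _))
  exact Complex.ext hre him

/-- Every point of the torus is a peak point of `𝒜_β`. -/
lemma exists_peak {β : ℝ} (hβ : 0 < β) (p : Circle × Circle) :
    ∃ u ∈ Asub β, u p = 1 ∧ ‖u‖ ≤ 1 ∧ ∀ x, x ≠ p → ‖u x‖ < 1 := by
  let a : C(Circle × Circle, ℂ) := ((p.1⁻¹ : Circle) : ℂ) • chi 1 0
  let b : C(Circle × Circle, ℂ) := ((p.2⁻¹ : Circle) : ℂ) • chi 0 1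
  have ha : ∀ x, a x = ((p.1⁻¹ * x.1 : Circle) : ℂ) := fun x => by
    simp [a, chi_apply]
  have hb : ∀ x, b x = ((p.2⁻¹ * x.2 : Circle) : ℂ) := fun x => by
    simp [b, chi_apply]
  let u : C(Circle × Circle, ℂ) := (4⁻¹ : ℂ) • (1 + a + (1 + b))
  have hu : ∀ x, ‖u x‖ = 4⁻¹ * ‖(1 + a x) + (1 + b x)‖ := fun x => by
    simp only [u, ContinuousMap.smul_apply, ContinuousMap.add_apply, ContinuousMap.one_apply,
      norm_smul, norm_inv]
    norm_num
  have ha1 : ∀ x, ‖a x‖ = 1 := fun x => by rw [ha, Circle.norm_coe]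
  have hb1 : ∀ x, ‖b x‖ = 1 := fun x => by rw [hb, Circle.norm_coe]
  have ha2 : ∀ x, ‖1 + a x‖ ≤ 2 := fun x => by
    have := norm_add_le 1 (a x); rw [ha1, norm_one] at this; linarith
  have hb2 : ∀ x, ‖1 + b x‖ ≤ 2 := fun x => by
    have := norm_add_le 1 (b x); rw [hb1, norm_one] at this; linarith
  have hle : ∀ x, ‖u x‖ ≤ 4⁻¹ * (‖1 + a x‖ + ‖1 + b x‖) := fun x => by
    rw [hu]; gcongr; exact norm_add_le _ _
  refine ⟨u, ?_, ?_, ?_, ?_⟩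
  · have h1 := one_mem β
    exact Submodule.smul_mem _ _ (Submodule.add_mem _
      (Submodule.add_mem _ h1 (Submodule.smul_mem _ _ (chi_mem (by simp))))
      (Submodule.add_mem _ h1 (Submodule.smul_mem _ _ (chi_mem (by simpa using hβ.le)))))
  · simp only [u, ContinuousMap.smul_apply, ContinuousMap.add_apply, ContinuousMap.one_apply, ha,
      hb]
    norm_num
  · rw [ContinuousMap.norm_le _ zero_le_one]
    intro x
    linarith [hle x, ha2 x, hb2 x]
  · intro x hx
    by_contra! hge
    have h1 := hle x
    have h2 := eq_one_of_two_le_norm (ha1 x).le (by linarith [hb2 x])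
    have h3 := eq_one_of_two_le_norm (hb1 x).le (by linarith [ha2 x])
    rw [ha, Circle.coe_eq_one, inv_mul_eq_one] at h2
    rw [hb, Circle.coe_eq_one, inv_mul_eq_one] at h3
    exact hx (Prod.ext h2.symm h3.symm)

/-- If `u` peaks at `p` and `g` vanishes there, then `g u ^ n` tends to `0` uniformly, by Dini's
theorem. -/
lemma exists_norm_mul_pow_lt {p : Circle × Circle} {u g : C(Circle × Circle, ℂ)}
    (hu : ‖u‖ ≤ 1) (hu' : ∀ x, x ≠ p → ‖u x‖ < 1) (hg : g p = 0) {ε : ℝ} (hε : 0 < ε) :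
    ∃ n : ℕ, ‖g * u ^ n‖ < ε := by
  have hD := Antitone.tendstoUniformly_of_forall_tendsto
    (F := fun (n : ℕ) (x : Circle × Circle) => ‖g x‖ * ‖u x‖ ^ n) (f := fun _ => (0 : ℝ))
    (fun n => by fun_prop)
    (fun n m hnm x => mul_le_mul_of_nonneg_left
      (pow_le_pow_of_le_one (norm_nonneg _) ((u.norm_coe_le_norm x).trans hu) hnm)
      (norm_nonneg _))
    continuous_const
    (fun x => by
      by_cases hx : x = p
      · simp [hx, hg]
      · simpa using (tendsto_pow_atTop_nhds_zero_of_lt_one (norm_nonneg _) (hu' x hx)).const_mul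
          ‖g x‖)
  obtain ⟨n, hn⟩ := (Metric.tendstoUniformly_iff.mp hD ε hε).exists
  refine ⟨n, (ContinuousMap.norm_lt_iff _ hε).mpr fun x => ?_⟩
  have := hn x
  rw [dist_zero_left, Real.norm_of_nonneg (by positivity)] at this
  simpa using this

lemma isom_map_one {α β : ℝ} {Φ : Aset α → Aset β} (hΦ : IsIsomIso α β Φ) :
    (Φ ⟨1, one_mem α⟩ : C(Circle × Circle, ℂ)) = 1 := by
  obtain ⟨⟨-, hsurj⟩, -, -, hmul, -⟩ := hΦ
  obtain ⟨g, hg⟩ := hsurj ⟨1, one_mem β⟩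
  have := hmul ⟨1, one_mem α⟩ g g (one_mul _).symm
  rw [hg] at this
  simpa using this.symm

/-- Evaluation of `Φ f` at a point `p` is evaluation of `f` at a point `q`. The point `q` is one
where the preimage `v` of a function peaking at `p` takes the value `1`. -/
lemma isom_exists_point {α β : ℝ} (hβ : 0 < β) {Φ : Aset α → Aset β}
    (hΦ : IsIsomIso α β Φ) (p : Circle × Circle) :
    ∃ q, ∀ f : Aset α, (Φ f : C(Circle × Circle, ℂ)) p = (f : C(Circle × Circle, ℂ)) q := by
  have h1 := isom_map_one hΦ
  obtain ⟨⟨-, hsurj⟩, hadd, hsmul, hmul, hnorm⟩ := hΦ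
  obtain ⟨u, huA, hup, hu, hu'⟩ := exists_peak hβ p
  obtain ⟨v, hv⟩ := hsurj ⟨u, huA⟩
  have hv1 : ‖(v : C(Circle × Circle, ℂ))‖ ≤ 1 := by rw [← hnorm, hv]; exact hu
  -- `‖1 + v‖ = ‖1 + u‖ = 2` is attained, and only the value `1` of `v` allows this
  have hq : ∃ q, (v : C(Circle × Circle, ℂ)) q = 1 := by
    have hw := hadd ⟨1, one_mem α⟩ v ⟨1 + v, Submodule.add_mem (Asub α) (one_mem α) v.2⟩ rfl
    have hwn := hnorm ⟨1 + v, Submodule.add_mem (Asub α) (one_mem α) v.2⟩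
    rw [hw, h1, hv] at hwn
    have h2 : 2 ≤ ‖(1 : C(Circle × Circle, ℂ)) + v‖ := by
      rw [← hwn]
      refine le_trans ?_ (ContinuousMap.norm_coe_le_norm _ p)
      simp only [ContinuousMap.add_apply, ContinuousMap.one_apply, hup]
      norm_num
    by_contra! hne
    refine absurd h2 (not_le.mpr ((ContinuousMap.norm_lt_iff _ two_pos).mpr fun q => ?_))
    by_contra! hge
    exact hne q (eq_one_of_two_le_norm ((ContinuousMap.norm_coe_le_norm _ q).trans hv1) hge)
  obtain ⟨q, hq⟩ := hq
  -- `|f q| = |f q (v q) ^ n|` is at most `‖Φ f * u ^ n‖`, which tends to `0` when `Φ f p = 0`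
  have hker : ∀ f : Aset α, (Φ f : C(Circle × Circle, ℂ)) p = 0 →
      (f : C(Circle × Circle, ℂ)) q = 0 := by
    intro f hf
    have hpow : ∀ n : ℕ, (Φ ⟨(f : C(Circle × Circle, ℂ)) * (v : C(Circle × Circle, ℂ)) ^ n,
        mul_mem f.2 (pow_mem v.2 n)⟩ : C(Circle × Circle, ℂ)) =
        Φ f * u ^ n := by
      intro n
      induction n with
      | zero => simp
      | succ n ih =>
        rw [hmul ⟨(f : C(Circle × Circle, ℂ)) * (v : C(Circle × Circle, ℂ)) ^ n,
        mul_mem f.2 (pow_mem v.2 n)⟩ v _ (by simp [pow_succ, mul_assoc]), ih,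
          hv, pow_succ, mul_assoc]
    rw [← norm_le_zero_iff]
    refine le_of_forall_pos_le_add fun ε hε => ?_
    obtain ⟨n, hn⟩ := exists_norm_mul_pow_lt hu hu' hf hε
    rw [← hpow, hnorm] at hn
    have := ContinuousMap.norm_coe_le_norm
      ((f : C(Circle × Circle, ℂ)) * (v : C(Circle × Circle, ℂ)) ^ n) q
    simp only [ContinuousMap.mul_apply, ContinuousMap.pow_apply, hq, one_pow, mul_one] at this
    linarith
  refine ⟨q, fun f => ?_⟩
  set c := (Φ f : C(Circle × Circle, ℂ)) p with hc
  have hcA : (-c) • (1 : C(Circle × Circle, ℂ)) ∈ Asub α := Submodule.smul_mem _ _ (one_mem α)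
  have e1 := hsmul (-c) ⟨1, one_mem α⟩ ⟨_, hcA⟩ rfl
  have e2 := hadd f ⟨_, hcA⟩ ⟨_, Submodule.add_mem (Asub α) f.2 hcA⟩ rfl
  have e3 := hker ⟨_, Submodule.add_mem (Asub α) f.2 hcA⟩ (by
    rw [e2, e1, h1]; simp [← hc])
  simp only [ContinuousMap.add_apply, ContinuousMap.smul_apply, ContinuousMap.one_apply,
    smul_eq_mul, mul_one] at e3
  linear_combination -e3

lemma ext_of_chi {p q : Circle × Circle} (h1 : chi 1 0 p = chi 1 0 q)
    (h2 : chi 0 1 p = chi 0 1 q) : p = q := by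
  simp only [chi_apply, zpow_one, zpow_zero, mul_one, one_mul] at h1 h2
  exact Prod.ext (Circle.ext h1) (Circle.ext h2)

lemma chi10_mem (α : ℝ) : chi 1 0 ∈ Asub α := chi_mem (by simp)

lemma chi01_mem {α : ℝ} (hα : 0 < α) : chi 0 1 ∈ Asub α := chi_mem (by simpa using hα.le)

/-- An isometric isomorphism is composition with a map `h` of the torus. The coordinates of `h` are
the images of `z` and `w`, whence its continuity. -/
lemma isom_exists_map {α β : ℝ} (hα : 0 < α) (hβ : 0 < β) {Φ : Aset α → Aset β}
    (hΦ : IsIsomIso α β Φ) : ∃ h : C(Circle × Circle, Circle × Circle), ∀ (f : Aset α) p,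
      (Φ f : C(Circle × Circle, ℂ)) p = (f : C(Circle × Circle, ℂ)) (h p) := by
  choose h hh using isom_exists_point hβ hΦ
  refine ⟨⟨h, ?_⟩, fun f p => hh p f⟩
  refine Continuous.prodMk (f := fun p => (h p).1) (g := fun p => (h p).2)
    (continuous_induced_rng.mpr ?_) (continuous_induced_rng.mpr ?_)
  · convert (Φ ⟨chi 1 0, chi10_mem α⟩ : C(Circle × Circle, ℂ)).continuous using 1
    ext p; simp [hh, chi_apply]; rfl
  · convert (Φ ⟨chi 0 1, chi01_mem hα⟩ : C(Circle × Circle, ℂ)).continuous using 1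
    ext p; simp [hh, chi_apply]; rfl

lemma isom_exists_inverse {α β : ℝ} {Φ : Aset α → Aset β} (hΦ : IsIsomIso α β Φ) :
    ∃ Ψ : Aset β → Aset α, IsIsomIso β α Ψ ∧ (∀ f, Ψ (Φ f) = f) ∧ ∀ g, Φ (Ψ g) = g := by
  obtain ⟨hbij, hadd, hsmul, hmul, hnorm⟩ := hΦ
  let E := Equiv.ofBijective Φ hbij
  have hΦE : ∀ g, Φ (E.symm g) = g := E.apply_symm_apply
  refine ⟨E.symm, ⟨E.symm.bijective, ?_, ?_, ?_, ?_⟩, E.symm_apply_apply, hΦE⟩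
  · intro f g h hh
    have := hadd (E.symm f) (E.symm g) ⟨_, Submodule.add_mem (Asub α) (E.symm f).2 (E.symm g).2⟩ rfl
    rw [hΦE, hΦE, ← hh] at this
    rw [E.symm_apply_eq.mpr (Subtype.ext this.symm)]
  · intro c f g hg
    have := hsmul c (E.symm f) ⟨_, Submodule.smul_mem (Asub α) c (E.symm f).2⟩ rfl
    rw [hΦE, ← hg] at this
    rw [E.symm_apply_eq.mpr (Subtype.ext this.symm)]
  · intro f g h hh
    have := hmul (E.symm f) (E.symm g) ⟨_, mul_mem (E.symm f).2 (E.symm g).2⟩ rfl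
    rw [hΦE, hΦE, ← hh] at this
    rw [E.symm_apply_eq.mpr (Subtype.ext this.symm)]
  · intro f
    rw [← hnorm, hΦE]

/-! ### Self-maps of the torus and endomorphisms of the lattice of characters -/

/-- The additive map `ℤ² → ℤ²` induced on homotopy classes of characters by a self-map of the
torus. -/
lemma exists_degree (h : C(Circle × Circle, Circle × Circle)) :
    ∃ M : ℤ × ℤ →+ ℤ × ℤ, ∀ k : ℤ × ℤ, ∃ v : C(Circle × Circle, ℝ), ∀ p,
      chi k.1 k.2 (h p) = chi (M k).1 (M k).2 p * Circle.exp (v p) := by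
  obtain ⟨a, b, v, hv⟩ := exists_char_mul_exp ⟨fun p => (h p).1, by fun_prop⟩
  obtain ⟨c, d, w, hw⟩ := exists_char_mul_exp ⟨fun p => (h p).2, by fun_prop⟩
  simp only [ContinuousMap.coe_mk] at hv hw
  refine ⟨{ toFun := fun k => (k.1 * a + k.2 * c, k.1 * b + k.2 * d)
            map_zero' := by simp
            map_add' := fun k l => by ext <;> simp <;> ring }, fun k =>
    ⟨(k.1 : ℝ) • v + (k.2 : ℝ) • w, fun p => ?_⟩⟩
  rw [chi_apply, chi_apply, ← Circle.coe_mul, hv, hw]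
  congr 1
  simp only [AddMonoidHom.coe_mk, ZeroHom.coe_mk, ContinuousMap.add_apply,
    ContinuousMap.smul_apply, smul_eq_mul, Circle.exp_add, mul_zpow, ← zpow_mul, zpow_add,
    ← zsmul_eq_mul, Circle.exp_zsmul]
  simp only [mul_comm k.1, mul_comm k.2]
  simp only [mul_assoc, mul_left_comm]
  rfl

/-- The degree map is contravariantly functorial; only the inverse case is needed. -/
lemma degree_comp_eq_id {α : ℝ} (hirr : Irrational α)
    {h h' : C(Circle × Circle, Circle × Circle)} (hid : ∀ p, h (h' p) = p)
    {M M' : ℤ × ℤ →+ ℤ × ℤ}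
    (hM : ∀ k : ℤ × ℤ, ∃ v : C(Circle × Circle, ℝ), ∀ p,
      chi k.1 k.2 (h p) = chi (M k).1 (M k).2 p * Circle.exp (v p))
    (hM' : ∀ k : ℤ × ℤ, ∃ v : C(Circle × Circle, ℝ), ∀ p,
      chi k.1 k.2 (h' p) = chi (M' k).1 (M' k).2 p * Circle.exp (v p)) (k : ℤ × ℤ) :
    M' (M k) = k := by
  obtain ⟨v, hv⟩ := hM k
  obtain ⟨w, hw⟩ := hM' (M k)
  have := chi_homotopic_eq hirr (m := k.1) (n := k.2) (a := (M' (M k)).1)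
    (b := (M' (M k)).2) (v := w + v.comp h') fun p => by
    have := hv (h' p)
    rw [hid, hw] at this
    rw [this, ContinuousMap.add_apply, Circle.exp_add, Circle.coe_mul, mul_assoc,
      ContinuousMap.comp_apply]
  exact (Prod.ext this.1 this.2).symm

/-- The isomorphism `ℤ² ≃ G_α` sending `(m, n)` to its height `m + n α`. -/
def heightEquiv {α : ℝ} (hirr : Irrational α) : ℤ × ℤ ≃+ Gsub α :=
  AddEquiv.ofBijective
    ({ toFun := fun k => ⟨k.1 + k.2 * α, k.1, k.2, rfl⟩
       map_zero' := by ext; simp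
       map_add' := fun k l => by ext; simp; ring } : ℤ × ℤ →+ Gsub α)
    ⟨fun k l hkl => by
      have h : (k.1 : ℝ) + k.2 * α = l.1 + l.2 * α := congrArg Subtype.val hkl
      have := height_injective hirr (m := k.1) (n := k.2) (a := l.1) (b := l.2) (by linarith)
      exact Prod.ext this.1 this.2, fun ⟨x, m, n, hx⟩ => ⟨(m, n), Subtype.ext hx.symm⟩⟩

lemma heightEquiv_apply {α : ℝ} (hirr : Irrational α) (k : ℤ × ℤ) :
    (heightEquiv hirr k : ℝ) = k.1 + α * k.2 := by
  rw [mul_comm]; rfl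

lemma exists_ordered_of_isom {α β : ℝ} (hα : 0 < α) (hβ : 0 < β) (hirrα : Irrational α)
    (hirrβ : Irrational β) {Φ : Aset α → Aset β} (hΦ : IsIsomIso α β Φ) :
    ∃ e : Gsub α ≃+ Gsub β, ∀ x : Gsub α, 0 < (x : ℝ) → 0 < ((e x : ℝ)) := by
  obtain ⟨Ψ, hΨ, hΨΦ, hΦΨ⟩ := isom_exists_inverse hΦ
  obtain ⟨h, hh⟩ := isom_exists_map hα hβ hΦ
  obtain ⟨h', hh'⟩ := isom_exists_map hβ hα hΨ
  obtain ⟨M, hM⟩ := exists_degree h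
  obtain ⟨M', hM'⟩ := exists_degree h'
  have hid : ∀ p, h (h' p) = p := fun p => by
    apply ext_of_chi
    · rw [← hh ⟨chi 1 0, chi10_mem α⟩, ← hh', hΨΦ]
    · rw [← hh ⟨chi 0 1, chi01_mem hα⟩, ← hh', hΨΦ]
  have hid' : ∀ p, h' (h p) = p := fun p => by
    apply ext_of_chi
    · rw [← hh' ⟨chi 1 0, chi10_mem β⟩, ← hh, hΦΨ]
    · rw [← hh' ⟨chi 0 1, chi01_mem hβ⟩, ← hh, hΦΨ]
  let N : ℤ × ℤ ≃+ ℤ × ℤ :=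
    { M with
      invFun := M'
      left_inv := degree_comp_eq_id hirrα hid hM hM'
      right_inv := degree_comp_eq_id hirrα hid' hM' hM }
  let e := ((heightEquiv hirrα).symm.trans N).trans (heightEquiv hirrβ)
  refine ⟨e, fun x hx => lt_of_le_of_ne ?_ ?_⟩
  · obtain ⟨k, rfl⟩ := (heightEquiv hirrα).surjective x
    have hek : e (heightEquiv hirrα k) = heightEquiv hirrβ (M k) := by simp [e, N]
    rw [hek, heightEquiv_apply]
    rw [heightEquiv_apply] at hx
    obtain ⟨v, hv⟩ := hM k
    exact height_nonneg (Φ ⟨chi k.1 k.2, chi_mem hx.le⟩).2 fun p => by rw [hh]; exact hv p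
  · intro h0
    have : e x = 0 := Subtype.ext h0.symm
    rw [e.map_eq_zero_iff.mp this] at hx
    simp at hx

/-! ### Automorphisms of the torus -/

/-- The endomorphism of `𝕋²` dual to an endomorphism `N` of the character lattice `ℤ²`: its two
coordinates are the characters `N (1, 0)` and `N (0, 1)`. -/
def dualMap (N : ℤ × ℤ →+ ℤ × ℤ) : Circle × Circle →* Circle × Circle where
  toFun p := (p.1 ^ (N (1, 0)).1 * p.2 ^ (N (1, 0)).2, p.1 ^ (N (0, 1)).1 * p.2 ^ (N (0, 1)).2)
  map_one' := by simp
  map_mul' p q := by ext1 <;> simp [mul_zpow, mul_mul_mul_comm]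

lemma continuous_dualMap (N : ℤ × ℤ →+ ℤ × ℤ) : Continuous (dualMap N) := by
  have : ∀ k : ℤ, Continuous fun z : Circle => z ^ k := fun k => continuous_zpow k
  have h : ∀ a b : ℤ, Continuous fun p : Circle × Circle => p.1 ^ a * p.2 ^ b := fun a b =>
    ((this a).comp continuous_fst).mul ((this b).comp continuous_snd)
  exact (h _ _).prodMk (h _ _)

lemma chi_dualMap (N : ℤ × ℤ →+ ℤ × ℤ) (m n : ℤ) (p : Circle × Circle) :
    chi m n (dualMap N p) = chi (N (m, n)).1 (N (m, n)).2 p := by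
  have hN : N (m, n) = m • N (1, 0) + n • N (0, 1) := by
    rw [← map_zsmul, ← map_zsmul, ← map_add]; simp
  rw [chi_apply, chi_apply, hN]
  congr 1
  simp only [dualMap, MonoidHom.coe_mk, OneHom.coe_mk, mul_zpow, ← zpow_mul, Prod.fst_add,
    Prod.snd_add, Prod.smul_fst, Prod.smul_snd, smul_eq_mul, zpow_add, mul_comm m, mul_comm n]
  rw [mul_mul_mul_comm]

lemma dualMap_dualMap {N N' : ℤ × ℤ →+ ℤ × ℤ} (h : ∀ k, N' (N k) = k) (p : Circle × Circle) :
    dualMap N (dualMap N' p) = p := by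
  apply ext_of_chi <;> rw [chi_dualMap, chi_dualMap] <;> simp [h]

/-- Composition of functions with the dual of an endomorphism of `ℤ²`. -/
def pullback (N : ℤ × ℤ →+ ℤ × ℤ) (f : C(Circle × Circle, ℂ)) : C(Circle × Circle, ℂ) :=
  f.comp ⟨dualMap N, continuous_dualMap N⟩

lemma pullback_apply (N : ℤ × ℤ →+ ℤ × ℤ) (f : C(Circle × Circle, ℂ)) (p : Circle × Circle) :
    pullback N f p = f (dualMap N p) := rfl

/-- Composition with the dual automorphism permutes the Fourier coefficients, by invariance of Haar
measure under surjective endomorphisms. -/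
lemma fourierCoef_pullback {N N' : ℤ × ℤ →+ ℤ × ℤ} (h : ∀ k, N' (N k) = k)
    (f : C(Circle × Circle, ℂ)) (m n : ℤ) :
    fourierCoef (pullback N f) (N (m, n)).1 (N (m, n)).2 = fourierCoef f m n := by
  have hmp : MeasurePreserving (dualMap N) haarT2 haarT2 :=
    MonoidHom.measurePreserving (continuous_dualMap N)
      (fun p => ⟨_, dualMap_dualMap h p⟩) rfl
  have hneg : N (-m, -n) = -N (m, n) := by rw [← map_neg]; rfl
  unfold fourierCoef
  conv_rhs => rw [← hmp.map_eq]
  rw [integral_map hmp.aemeasurable (by fun_prop)]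
  congr 1; ext p
  rw [pullback_apply, chi_dualMap, hneg]
  rfl

lemma pullback_mem {α β : ℝ} {N N' : ℤ × ℤ →+ ℤ × ℤ} (h : ∀ k, N' (N k) = k)
    (h' : ∀ k, N (N' k) = k)
    (hpos : ∀ k : ℤ × ℤ, 0 ≤ (k.1 : ℝ) + α * k.2 → 0 ≤ ((N k).1 : ℝ) + β * (N k).2)
    {f : C(Circle × Circle, ℂ)} (hf : f ∈ Asub α) : pullback N f ∈ Asub β := by
  intro m n hmn
  have e := fourierCoef_pullback h f (N' (m, n)).1 (N' (m, n)).2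
  rw [Prod.mk.eta, h'] at e
  rw [e]
  refine hf _ _ ?_
  by_contra! hge
  have := hpos _ hge
  rw [h'] at this
  exact absurd hmn (not_lt.mpr this)

lemma pullback_pullback {N N' : ℤ × ℤ →+ ℤ × ℤ} (h : ∀ k, N' (N k) = k)
    (f : C(Circle × Circle, ℂ)) : pullback N' (pullback N f) = f := by
  ext p; rw [pullback_apply, pullback_apply, dualMap_dualMap h]

lemma norm_pullback_le (N : ℤ × ℤ →+ ℤ × ℤ) (f : C(Circle × Circle, ℂ)) :
    ‖pullback N f‖ ≤ ‖f‖ :=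
  (ContinuousMap.norm_le _ (norm_nonneg _)).mpr fun _ => f.norm_coe_le_norm _

lemma exists_isom_of_lattice {α β : ℝ} (N : ℤ × ℤ ≃+ ℤ × ℤ)
    (hpos : ∀ k : ℤ × ℤ, 0 ≤ (k.1 : ℝ) + α * k.2 ↔ 0 ≤ ((N k).1 : ℝ) + β * (N k).2) :
    ∃ Φ : Aset α → Aset β, IsIsomIso α β Φ := by
  have h1 : ∀ k, N.symm.toAddMonoidHom (N.toAddMonoidHom k) = k := N.symm_apply_apply
  have h2 : ∀ k, N.toAddMonoidHom (N.symm.toAddMonoidHom k) = k := N.apply_symm_apply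
  refine ⟨fun f => ⟨pullback N.toAddMonoidHom f,
    pullback_mem h1 h2 (fun k hk => (hpos k).mp hk) f.2⟩, ?_, ?_, ?_, ?_, ?_⟩
  · refine Function.bijective_iff_has_inverse.mpr
      ⟨fun g => ⟨pullback N.symm.toAddMonoidHom g, pullback_mem h2 h1 (fun k hk => (hpos _).mpr
        (by simpa using hk)) g.2⟩, fun f => ?_, fun g => ?_⟩
    · exact Subtype.ext (pullback_pullback h1 _)
    · exact Subtype.ext (pullback_pullback h2 _)
  · intro f g h hh; simp only [hh]; rfl
  · intro c f g hh; simp only [hh]; rfl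
  · intro f g h hh; simp only [hh]; rfl
  · intro f
    refine le_antisymm (norm_pullback_le _ _) ?_
    conv_lhs => rw [← pullback_pullback h1 (f : C(Circle × Circle, ℂ))]
    exact norm_pullback_le _ _

lemma exists_isom_of_ordered {α β : ℝ} (hirrα : Irrational α) (hirrβ : Irrational β)
    (e : Gsub α ≃+ Gsub β) (he : ∀ x : Gsub α, 0 < (x : ℝ) → 0 < ((e x : ℝ))) :
    ∃ Φ : Aset α → Aset β, IsIsomIso α β Φ := by
  refine exists_isom_of_lattice
    (((heightEquiv hirrα).trans e).trans (heightEquiv hirrβ).symm) fun k => ?_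
  rw [← heightEquiv_apply hirrα, ← heightEquiv_apply hirrβ]
  simp only [AddEquiv.trans_apply, AddEquiv.apply_symm_apply]
  generalize heightEquiv hirrα k = x
  constructor
  · intro hx
    rcases hx.eq_or_lt with h0 | h0
    · rw [show x = 0 from Subtype.ext h0.symm]; simp
    · exact (he x h0).le
  · intro hx
    by_contra! hneg
    have := he (-x) (by simpa using hneg)
    rw [map_neg] at this
    simp only [NegMemClass.coe_neg, Left.neg_pos_iff] at this
    linarith

end TorusAlgebra

/-- `𝒜_α` and `𝒜_β` are isometrically isomorphic if and only if there is a group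
isomorphism `G_α → G_β` mapping positive elements to positive elements. -/
theorem isomIso_iff_orderedGroupIso
    (α β : ℝ) (hα : 0 < α) (hβ : 0 < β) (hirrα : Irrational α) (hirrβ : Irrational β) :
    (∃ Φ : ↥(Aset α) → ↥(Aset β), IsIsomIso α β Φ) ↔
    (∃ e : Gsub α ≃+ Gsub β, ∀ x : Gsub α, 0 < (x : ℝ) → 0 < ((e x : ℝ))) := by
  constructor
  · rintro ⟨Φ, hΦ⟩
    exact TorusAlgebra.exists_ordered_of_isom hα hβ hirrα hirrβ hΦ
  · rintro ⟨e, he⟩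
    exact TorusAlgebra.exists_isom_of_ordered hirrα hirrβ e he
end
end

section
/- If α is a positive quadratic irrational number, then there exists a matrix A ∈ SL(2,ℤ), A not the identity, such that A·(1,α)ᵀ = λ·(1,α)ᵀ for some real λ > 0 (i.e., (1,α)ᵀ is an eigenvector of A with positive eigenvalue; equivalently, the induced map π(A) is an automorphism of 𝒜_α). -/
/-!
Let `a α² + b α + c = 0` with discriminant `D = b² - 4ac`, and put `t = 2 a α + b`, so `t² = D`.
Since `t` is irrational, `D` is positive and not a square, so Pell's equation `x² - D y² = 1` has a
solution with `x > 1` and `y > 0`. The matrix with rows `(x + b y, 2 a y)` and `(-2 c y, x - b y)`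
has `(1, α)` as an eigenvector with eigenvalue the unit `x + y t`; its
determinant is the norm `x² - D y² = 1`. The eigenvalue `l = x + y t` is positive because
`l` and its conjugate `x - y t` have product `1` and sum `2 x > 0`.
-/

/-- If `α` is a positive quadratic irrational, then there is a non-identity matrix
`A ∈ SL(2,ℤ)` having `(1,α)ᵀ` as an eigenvector with a positive eigenvalue. -/
theorem exists_sl2_eigenvector_of_quadratic_irrational
    (α : ℝ) (hα : 0 < α) (hirr : Irrational α)
    (hquad : ∃ a b c : ℤ, a ≠ 0 ∧ (a : ℝ) * α ^ 2 + (b : ℝ) * α + (c : ℝ) = 0) :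
    ∃ A : Matrix (Fin 2) (Fin 2) ℤ, A.det = 1 ∧ A ≠ 1 ∧
      ∃ l : ℝ, 0 < l ∧
        (A.map (Int.cast : ℤ → ℝ)).mulVec ![1, α] = l • ![1, α] := by
  obtain ⟨a, b, c, ha, h⟩ := hquad
  set t : ℝ := 2 * a * α + b with ht
  have htD : t ^ 2 = ((b ^ 2 - 4 * a * c : ℤ) : ℝ) := by
    push_cast
    linear_combination 4 * (a : ℝ) * h
  have htirr : Irrational t := by
    have h2a : (2 * a : ℤ) ≠ 0 := by simpa using ha
    have := (hirr.intCast_mul h2a).add_intCast b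
    push_cast at this
    exact this
  have hD : 0 < b ^ 2 - 4 * a * c := by
    have : (0 : ℝ) < ((b ^ 2 - 4 * a * c : ℤ) : ℝ) := by
      rw [← htD]
      have := htirr.ne_zero
      positivity
    exact_mod_cast this
  have hsq : ¬IsSquare (b ^ 2 - 4 * a * c) := by
    rintro ⟨n, hn⟩
    rw [hn] at htD
    push_cast at htD
    rw [← sq, sq_eq_sq_iff_eq_or_eq_neg] at htD
    rcases htD with h1 | h1
    · exact htirr.ne_int n h1
    · exact htirr.ne_int (-n) (by rw [h1]; push_cast; rfl)
  obtain ⟨s, hx, hy⟩ := Pell.Solution₁.exists_pos_of_not_isSquare hD hsq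
  have hs := s.prop
  generalize s.x = x at hx hs
  generalize s.y = y at hy hs
  have hx0 : (1 : ℝ) < x := by exact_mod_cast hx
  have hnorm : ((x : ℝ) + y * t) * (x - y * t) = 1 := by
    have hs' : (x : ℝ) ^ 2 - ((b ^ 2 - 4 * a * c : ℤ) : ℝ) * (y : ℝ) ^ 2 = 1 := by
      exact_mod_cast hs
    linear_combination hs' - (y : ℝ) ^ 2 * htD
  refine ⟨!![x + b * y, 2 * a * y; -2 * c * y, x - b * y], ?_, ?_, x + y * t, ?_, ?_⟩
  · rw [Matrix.det_fin_two_of]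
    linear_combination hs
  · intro hA
    -- The upper right entry `2 a y` is nonzero, unlike that of the identity.
    have h01 := congrFun (congrFun hA 0) 1
    simp [ha, hy.ne'] at h01
  · by_contra! hl
    -- If `l ≤ 0`, the conjugate `2 x - l` is positive, so the product cannot be `1`.
    nlinarith
  · ext i
    fin_cases i
    · simp [Matrix.mulVec, dotProduct, Fin.sum_univ_two, ht]
      ring
    · simp [Matrix.mulVec, dotProduct, Fin.sum_univ_two, ht]
      linear_combination -2 * (y : ℝ) * h
end

section
/- Let α be a positive quadratic irrational and let A₁, A₂ ∈ GL(2,ℤ) be matrices each having (1,α)ᵀ as an eigenvector with a positive eigenvalue, i.e., Aᵢ·(1,α)ᵀ = λᵢ·(1,α)ᵀ with λᵢ > 0 for i = 1,2. Then A₁A₂ = A₂A₁. -/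
/-! The commutator `A₁ * A₂ - A₂ * A₁` has integer entries and annihilates `(1, α)ᵀ`, because
`l₁ * l₂ = l₂ * l₁`. Each of its rows is thus an integer relation between `1` and `α`, which is
trivial since `α` is irrational; so the commutator vanishes. -/

theorem int_relation_trivial {α : ℝ} (hirr : Irrational α) {p q : ℤ}
    (h : (p : ℝ) + q * α = 0) : p = 0 ∧ q = 0 := by
  have hq : q = 0 := by
    by_contra hq
    exact ((hirr.intCast_mul hq).intCast_add p).ne_zero h
  subst hq
  exact ⟨by simpa using h, rfl⟩

theorem eq_zero_of_mulVec_eq_zero {α : ℝ} (hirr : Irrational α) (C : Matrix (Fin 2) (Fin 2) ℤ)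
    (h : (C.map (Int.cast : ℤ → ℝ)).mulVec ![1, α] = 0) : C = 0 := by
  have row (i : Fin 2) : C i 0 = 0 ∧ C i 1 = 0 := by
    refine int_relation_trivial hirr ?_
    simpa [Matrix.mulVec, dotProduct, Fin.sum_univ_two] using congrFun h i
  ext i j
  fin_cases j
  · exact (row i).1
  · exact (row i).2

/-- If `α` is a positive quadratic irrational and `A₁, A₂ ∈ GL(2,ℤ)` each have `(1,α)ᵀ` as
an eigenvector with a positive eigenvalue, then `A₁` and `A₂` commute. -/
theorem commute_of_common_eigenvector
    (α : ℝ) (hα : 0 < α) (hirr : Irrational α)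
    (hquad : ∃ a b c : ℤ, a ≠ 0 ∧ (a : ℝ) * α ^ 2 + (b : ℝ) * α + (c : ℝ) = 0)
    (A₁ A₂ : Matrix (Fin 2) (Fin 2) ℤ)
    (hdet₁ : A₁.det = 1 ∨ A₁.det = -1) (hdet₂ : A₂.det = 1 ∨ A₂.det = -1)
    (l₁ l₂ : ℝ) (hl₁ : 0 < l₁) (hl₂ : 0 < l₂)
    (hev₁ : (A₁.map (Int.cast : ℤ → ℝ)).mulVec ![1, α] = l₁ • ![1, α])
    (hev₂ : (A₂.map (Int.cast : ℤ → ℝ)).mulVec ![1, α] = l₂ • ![1, α]) :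
    A₁ * A₂ = A₂ * A₁ := by
  refine sub_eq_zero.mp (eq_zero_of_mulVec_eq_zero hirr _ ?_)
  have hmap : (A₁ * A₂ - A₂ * A₁).map (Int.cast : ℤ → ℝ) =
      A₁.map (Int.cast : ℤ → ℝ) * A₂.map (Int.cast : ℤ → ℝ) -
        A₂.map (Int.cast : ℤ → ℝ) * A₁.map (Int.cast : ℤ → ℝ) := by
    ext i j
    simp [Matrix.mul_apply]
  rw [hmap, Matrix.sub_mulVec, ← Matrix.mulVec_mulVec, ← Matrix.mulVec_mulVec, hev₁, hev₂,
    Matrix.mulVec_smul, Matrix.mulVec_smul, hev₁, hev₂, smul_comm, sub_self]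
end

section
/- Let α be a positive quadratic irrational. Then there exists a matrix A₀ ∈ GL(2,ℤ), A₀ not the identity, such that every A ∈ GL(2,ℤ) satisfying A·(1,α)ᵀ = λ·(1,α)ᵀ for some λ > 0 (equivalently, every A for which π(A) is an automorphism of 𝒜_α) is of the form A = A₀ⁿ for some n ∈ ℤ. -/
/-!
The eigenvalue map `A ↦ l` is injective on the matrices that have `(1, α)ᵀ` as an eigenvector:
if `A = !![p, q; r, s]`, then `p + q α = l` and `r + s α = l α`, and since `α` is irrational these
two equations determine the integers `p, q, r, s` (`IsEigen.unique`).

Taking logarithms, the positive eigenvalues form a subgroup of `ℝ`. It is discrete: an eigenvalue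
`l` satisfies `l ^ 2 - t l + d = 0` with `t = tr A ∈ ℤ` and `d = det A = ±1`, so `l + 1 / l` or
`l - 1 / l` is an integer, which is impossible for `1 < l < 3 / 2` (`IsEigen.not_near_one`).
A discrete subgroup of `ℝ` is cyclic, and a matrix over a generator is the required `A₀`. Should
that matrix be the identity, there is no other eigenmatrix and any `A₀ ≠ 1` works, with `n = 0`.
-/

namespace Eigenmatrices

/-- `A` has `(1, α)ᵀ` as an eigenvector with eigenvalue `l`. -/
def IsEigen (α : ℝ) (A : GL (Fin 2) ℤ) (l : ℝ) : Prop :=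
  ((A : Matrix (Fin 2) (Fin 2) ℤ).map (Int.cast : ℤ → ℝ)).mulVec ![1, α] = l • ![1, α]

theorem isEigen_iff {α : ℝ} {A : GL (Fin 2) ℤ} {l : ℝ} :
    IsEigen α A l ↔
      (A.val 0 0 : ℝ) + A.val 0 1 * α = l ∧ (A.val 1 0 : ℝ) + A.val 1 1 * α = l * α := by
  unfold IsEigen
  rw [funext_iff, Fin.forall_fin_two]
  simp [Matrix.mulVec, dotProduct, Fin.sum_univ_two]

theorem isEigen_one (α : ℝ) : IsEigen α 1 1 := by
  simp [isEigen_iff]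

theorem IsEigen.mul {α : ℝ} {A B : GL (Fin 2) ℤ} {l m : ℝ}
    (hA : IsEigen α A l) (hB : IsEigen α B m) : IsEigen α (A * B) (l * m) := by
  rw [isEigen_iff] at *
  obtain ⟨h1, h2⟩ := hA
  obtain ⟨h3, h4⟩ := hB
  simp only [Units.val_mul, Matrix.mul_apply, Fin.sum_univ_two]
  push_cast
  constructor
  · linear_combination (A.val 0 0 : ℝ) * h3 + (A.val 0 1 : ℝ) * h4 + m * h1
  · linear_combination (A.val 1 0 : ℝ) * h3 + (A.val 1 1 : ℝ) * h4 + m * h2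

theorem IsEigen.inv {α : ℝ} {A : GL (Fin 2) ℤ} {l : ℝ} (hl : l ≠ 0)
    (hA : IsEigen α A l) : IsEigen α A⁻¹ l⁻¹ := by
  have hinv : (A⁻¹).val.map (Int.cast : ℤ → ℝ) * A.val.map (Int.cast : ℤ → ℝ) = 1 := by
    have h := Matrix.map_mul (L := (A⁻¹).val) (M := A.val) (f := Int.castRingHom ℝ)
    rw [A.inv_mul, Matrix.map_one _ (map_zero _) (map_one _)] at h
    exact h.symm
  unfold IsEigen at *
  have h := congrArg (fun w => ((A⁻¹).val.map (Int.cast : ℤ → ℝ)).mulVec w) hA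
  simp only [Matrix.mulVec_mulVec, hinv, Matrix.one_mulVec, Matrix.mulVec_smul] at h
  rw [eq_inv_smul_iff₀ hl]
  exact h.symm

/-- `1` and an irrational number are linearly independent over the integers. -/
theorem eq_of_add_mul_eq {α : ℝ} (hirr : Irrational α) {a b c d : ℤ}
    (h : (a : ℝ) + b * α = c + d * α) : a = c ∧ b = d := by
  have hbd : b = d := by
    by_contra hne
    have h0 : b - d ≠ 0 := sub_ne_zero.mpr hne
    refine ((hirr.intCast_mul h0).ne_int (c - a)) ?_
    push_cast
    linear_combination h
  subst hbd
  exact ⟨by exact_mod_cast add_right_cancel h, rfl⟩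

theorem IsEigen.unique {α : ℝ} (hirr : Irrational α) {A B : GL (Fin 2) ℤ} {l : ℝ}
    (hA : IsEigen α A l) (hB : IsEigen α B l) : A = B := by
  rw [isEigen_iff] at hA hB
  obtain ⟨h00, h01⟩ := eq_of_add_mul_eq hirr (hA.1.trans hB.1.symm)
  obtain ⟨h10, h11⟩ := eq_of_add_mul_eq hirr (hA.2.trans hB.2.symm)
  ext i j
  fin_cases i <;> fin_cases j <;> assumption

/-- The positive eigenvalues are isolated from `1`, because `l + 1 / l` or `l - 1 / l` has to be
an integer, according to the sign of the determinant. -/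
theorem IsEigen.not_near_one {α : ℝ} (hα : α ≠ 0) {A : GL (Fin 2) ℤ} {l : ℝ}
    (hA : IsEigen α A l) (h1 : 1 < l) (h2 : l < 3 / 2) : False := by
  obtain ⟨h3, h4⟩ := isEigen_iff.mp hA
  obtain ⟨t, ht⟩ : ∃ t : ℤ, t = A.val 0 0 + A.val 1 1 := ⟨_, rfl⟩
  have ht' : (t : ℝ) = A.val 0 0 + A.val 1 1 := by exact_mod_cast ht
  have hdet : (A.val.det : ℝ) = A.val 0 0 * A.val 1 1 - A.val 0 1 * A.val 1 0 := by
    rw [Matrix.det_fin_two]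
    push_cast
    ring
  have hchar : l ^ 2 - t * l + A.val.det = 0 := by
    refine (mul_eq_zero.mp ?_).resolve_left hα
    rw [ht', hdet]
    linear_combination ((A.val 0 0 : ℝ) - l) * h4 - (A.val 1 0 : ℝ) * h3
  have hunit : IsUnit A.val.det := (Matrix.isUnit_iff_isUnit_det _).mp A.isUnit
  rcases Int.isUnit_iff.mp hunit with hd | hd <;> rw [hd] at hchar <;> push_cast at hchar
  · -- `l + 1 / l = t` lies strictly between `2` and `3`.
    have : (2 : ℝ) < t := by nlinarith
    have : (t : ℝ) < 3 := by nlinarith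
    have : (2 : ℤ) < t := by exact_mod_cast ‹(2 : ℝ) < t›
    have : t < (3 : ℤ) := by exact_mod_cast ‹(t : ℝ) < 3›
    omega
  · -- `l - 1 / l = t` lies strictly between `0` and `1`.
    have : (0 : ℝ) < t := by nlinarith
    have : (t : ℝ) < 1 := by nlinarith
    have : (0 : ℤ) < t := by exact_mod_cast ‹(0 : ℝ) < t›
    have : t < (1 : ℤ) := by exact_mod_cast ‹(t : ℝ) < 1›
    omega

/-- The group of pairs `(A, x)` such that `(1, α)ᵀ` is an eigenvector of `A` with eigenvalue
`exp x`. Positive eigenvalues are recorded by their logarithms, so that the second projection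
lands in an archimedean ordered group. -/
noncomputable def eigenPairs (α : ℝ) : Subgroup (GL (Fin 2) ℤ × Multiplicative ℝ) where
  carrier := {P | IsEigen α P.1 (Real.exp P.2.toAdd)}
  one_mem' := by simpa using isEigen_one α
  mul_mem' := by
    intro P Q hP hQ
    simpa [Real.exp_add] using IsEigen.mul hP hQ
  inv_mem' := by
    intro P hP
    simpa [Real.exp_neg] using IsEigen.inv (Real.exp_pos _).ne' hP

theorem mem_eigenPairs {α : ℝ} {A : GL (Fin 2) ℤ} {x : Multiplicative ℝ} :
    (A, x) ∈ eigenPairs α ↔ IsEigen α A (Real.exp x.toAdd) := Iff.rfl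

/-- The logarithms of the positive eigenvalues form a cyclic group. -/
theorem exists_closure_eq {α : ℝ} (hα : α ≠ 0) :
    ∃ g : Multiplicative ℝ,
      (eigenPairs α).map (MonoidHom.snd _ _) = Subgroup.closure {g} := by
  have hlog : (0 : ℝ) < Real.log (3 / 2) := Real.log_pos (by norm_num)
  refine Subgroup.cyclic_of_isolated_one (a := Multiplicative.ofAdd (Real.log (3 / 2))) hlog ?_
  rw [Set.disjoint_left]
  rintro _ ⟨⟨A, x⟩, hP, rfl⟩ ⟨hx0, hx1⟩
  have hx0' : 0 < x.toAdd := hx0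
  have hx1' : x.toAdd < Real.log (3 / 2) := hx1
  exact (mem_eigenPairs.mp hP).not_near_one hα (Real.one_lt_exp_iff.mpr hx0')
    ((Real.lt_log_iff_exp_lt (by norm_num)).mp hx1')

end Eigenmatrices

open Eigenmatrices in
/-- If `α` is a positive quadratic irrational, then there is a non-identity `A₀ ∈ GL(2,ℤ)`
such that every `A ∈ GL(2,ℤ)` having `(1,α)ᵀ` as an eigenvector with positive eigenvalue
is an integer power of `A₀`. -/
theorem exists_generator_of_eigenmatrices
    (α : ℝ) (hα : 0 < α) (hirr : Irrational α)
    (hquad : ∃ a b c : ℤ, a ≠ 0 ∧ (a : ℝ) * α ^ 2 + (b : ℝ) * α + (c : ℝ) = 0) :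
    ∃ A₀ : GL (Fin 2) ℤ, A₀ ≠ 1 ∧
      ∀ A : GL (Fin 2) ℤ,
        (∃ l : ℝ, 0 < l ∧
          ((A : Matrix (Fin 2) (Fin 2) ℤ).map (Int.cast : ℤ → ℝ)).mulVec ![1, α]
            = l • ![1, α]) →
        ∃ n : ℤ, A = A₀ ^ n := by
  obtain ⟨g, hg⟩ := exists_closure_eq hα.ne'
  obtain ⟨⟨B, x⟩, hB, rfl⟩ : g ∈ (eigenPairs α).map (MonoidHom.snd _ _) :=
    hg ▸ Subgroup.subset_closure rfl
  have key : ∀ A : GL (Fin 2) ℤ, (∃ l : ℝ, 0 < l ∧ IsEigen α A l) → ∃ n : ℤ, A = B ^ n := by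
    rintro A ⟨l, hl, hA⟩
    have hmem : (A, Multiplicative.ofAdd (Real.log l)) ∈ eigenPairs α := by
      rw [mem_eigenPairs, toAdd_ofAdd, Real.exp_log hl]
      exact hA
    have hcl := Subgroup.mem_map_of_mem (MonoidHom.snd _ _) hmem
    rw [hg, Subgroup.mem_closure_singleton] at hcl
    obtain ⟨n, hn⟩ := hcl
    have hpow : (B ^ n, x ^ n) ∈ eigenPairs α := (eigenPairs α).zpow_mem hB n
    have hn' : x ^ n = Multiplicative.ofAdd (Real.log l) := hn
    rw [hn'] at hpow
    exact ⟨n, (mem_eigenPairs.mp hmem).unique hirr (mem_eigenPairs.mp hpow)⟩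
  by_cases hB1 : B = 1
  · refine ⟨-1, fun h => ?_, fun A hA => ⟨0, ?_⟩⟩
    · have h00 := congrArg (fun M : GL (Fin 2) ℤ => M.val 0 0) h
      simp at h00
    · obtain ⟨n, hn⟩ := key A hA
      simpa [hB1] using hn
  · exact ⟨B, hB1, key⟩
end

section
/- Let p, q be positive integers with gcd(p,q) = 1 such that α = √(p/q) is irrational, and suppose the negative Pell equation x² − pq y² = −1 is solvable in integers. Let (x₁′,y₁′) be its fundamental solution, i.e., the pair of positive integers satisfying it with x₁′ minimal. Then a matrix A = [[m₁,n₁],[m₂,n₂]] ∈ GL(2,ℤ) satisfies m₁ + αn₁ > 0 and n₁α² + (m₁ − n₂)α − m₂ = 0 (equivalently, π(A) is an automorphism of 𝒜_α) if and only if A = [[x₁′, q y₁′],[p y₁′, x₁′]]ⁿ for some n ∈ ℤ. -/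
/-!
The condition on `A` says exactly that `(1, α)ᵀ` is an eigenvector of `A` with positive eigenvalue
`c = m₁ + α n₁`. Such matrices form a group on which the eigenvalue is multiplicative. Since `α` is
irrational with `q α² = p`, each of them has the form `[[a, q b], [p b, a]]`, with eigenvalue
`a + b √(pq)` and determinant `a² - pq b² = ±1` (`PosEigen.exists_eq`); in particular the eigenvalue
determines the matrix.

Let `ε > 1` be the eigenvalue of `M`. If the determinant is `-1` and `c > 1`, then the conjugate
`-1 / c` of `c` lies in `(-1, 0)`, so `a` and `b` are positive and minimality of the fundamental
solution gives `c ≥ ε` (`PosEigen.le_of_det_neg_one`). Dividing a given `A` by a power of `M`, one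
may assume `1 ≤ c < ε`. If `c = 1` the matrix is the identity. Otherwise its determinant must be
`1`, and then `M A⁻¹` has determinant `-1` and eigenvalue `ε / c` strictly between `1` and `ε`,
a contradiction.
-/

/-- `(1, α)ᵀ` is an eigenvector of `A` with the positive eigenvalue `c`. -/
structure PosEigen (α : ℝ) (A : GL (Fin 2) ℤ) (c : ℝ) : Prop where
  pos : 0 < c
  fst : (A.1 0 0 : ℝ) + A.1 0 1 * α = c
  snd : (A.1 1 0 : ℝ) + A.1 1 1 * α = c * α

namespace PosEigen

theorem one (α : ℝ) : PosEigen α 1 1 :=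
  ⟨one_pos, by simp, by simp⟩

theorem mul {α c d : ℝ} {A B : GL (Fin 2) ℤ} (hA : PosEigen α A c) (hB : PosEigen α B d) :
    PosEigen α (A * B) (c * d) := by
  obtain ⟨hc, h1, h2⟩ := hA
  obtain ⟨hd, h3, h4⟩ := hB
  refine ⟨mul_pos hc hd, ?_, ?_⟩
  · simp only [Units.val_mul, Matrix.mul_apply, Fin.sum_univ_two, Int.cast_add, Int.cast_mul]
    linear_combination (A.1 0 0 : ℝ) * h3 + (A.1 0 1 : ℝ) * h4 + d * h1
  · simp only [Units.val_mul, Matrix.mul_apply, Fin.sum_univ_two, Int.cast_add, Int.cast_mul]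
    linear_combination (A.1 1 0 : ℝ) * h3 + (A.1 1 1 : ℝ) * h4 + d * h2

theorem inv {α c : ℝ} {A : GL (Fin 2) ℤ} (hA : PosEigen α A c) : PosEigen α A⁻¹ c⁻¹ := by
  obtain ⟨hc, h1, h2⟩ := hA
  have hmul : (A⁻¹).1 * A.1 = 1 := by rw [← Units.val_mul, inv_mul_cancel, Units.val_one]
  have hent (i j : Fin 2) :
      ((A⁻¹).1 i 0 : ℝ) * A.1 0 j + (A⁻¹).1 i 1 * A.1 1 j
        = (((1 : Matrix (Fin 2) (Fin 2) ℤ) i j : ℤ) : ℝ) := by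
    rw [← hmul, Matrix.mul_apply, Fin.sum_univ_two]
    push_cast
    rfl
  have e00 := hent 0 0
  have e01 := hent 0 1
  have e10 := hent 1 0
  have e11 := hent 1 1
  simp only [Matrix.one_apply, Fin.isValue, if_true, zero_ne_one, one_ne_zero, if_false,
    Int.cast_one, Int.cast_zero] at e00 e01 e10 e11
  refine ⟨inv_pos.2 hc, ?_, ?_⟩
  · apply eq_inv_of_mul_eq_one_left
    linear_combination e00 + α * e01 - ((A⁻¹).1 0 0 : ℝ) * h1 - ((A⁻¹).1 0 1 : ℝ) * h2
  · rw [eq_inv_mul_iff_mul_eq₀ hc.ne']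
    linear_combination e10 + α * e11 - ((A⁻¹).1 1 0 : ℝ) * h1 - ((A⁻¹).1 1 1 : ℝ) * h2

theorem pow {α c : ℝ} {A : GL (Fin 2) ℤ} (hA : PosEigen α A c) (n : ℕ) :
    PosEigen α (A ^ n) (c ^ n) := by
  induction n with
  | zero => simpa using one α
  | succ n ih => simpa only [pow_succ] using ih.mul hA

theorem zpow {α c : ℝ} {A : GL (Fin 2) ℤ} (hA : PosEigen α A c) (n : ℤ) :
    PosEigen α (A ^ n) (c ^ n) := by
  cases n with
  | ofNat n => simpa using hA.pow n
  | negSucc n => simpa only [zpow_negSucc] using (hA.pow (n + 1)).inv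

end PosEigen

/-- `1` and an irrational number are linearly independent over `ℤ`. -/
theorem Irrational.int_eq_zero_of_add_mul_eq_zero {α : ℝ} (hirr : Irrational α) {u v : ℤ}
    (h : (u : ℝ) + v * α = 0) : u = 0 ∧ v = 0 := by
  have hv : v = 0 := by
    by_contra hv
    apply (hirr.intCast_mul hv).ne_int (-u)
    push_cast
    linarith
  subst hv
  exact ⟨by simpa using h, rfl⟩

namespace PosEigen

/-- If `q α² = p` in lowest terms, matrices with eigenvector `(1, α)ᵀ` represent multiplication by
elements of `ℤ[√(pq)]`. -/
theorem exists_eq {p q : ℕ} (hq : 0 < q) (hcop : Nat.Coprime p q) {α c : ℝ}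
    (hα : q * α ^ 2 = p) (hirr : Irrational α) {A : GL (Fin 2) ℤ} (hA : PosEigen α A c) :
    ∃ a b : ℤ, A.1 = !![a, q * b; p * b, a] := by
  obtain ⟨-, h1, h2⟩ := hA
  have key : ((q * A.1 1 0 - p * A.1 0 1 : ℤ) : ℝ) + ((q * (A.1 1 1 - A.1 0 0) : ℤ) : ℝ) * α
      = 0 := by
    push_cast
    linear_combination (q : ℝ) * h2 - q * α * h1 + (A.1 0 1 : ℝ) * hα
  obtain ⟨k1, k2⟩ := hirr.int_eq_zero_of_add_mul_eq_zero key
  have hq0 : (q : ℤ) ≠ 0 := by positivity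
  have hdiag : A.1 1 1 = A.1 0 0 := by
    rcases mul_eq_zero.1 k2 with h | h
    · exact absurd h hq0
    · linarith
  have hdvd : (q : ℤ) ∣ A.1 0 1 := by
    refine (Nat.isCoprime_iff_coprime.2 hcop).symm.dvd_of_dvd_mul_left (y := (p : ℤ)) ⟨A.1 1 0, ?_⟩
    linarith
  obtain ⟨b, hb⟩ := hdvd
  have hoff : A.1 1 0 = p * b := by
    apply mul_left_cancel₀ hq0
    rw [hb] at k1
    linarith
  refine ⟨A.1 0 0, b, ?_⟩
  ext i j
  fin_cases i <;> fin_cases j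
  · rfl
  · exact hb
  · exact hoff
  · exact hdiag

theorem eq_one {p q : ℕ} (hq : 0 < q) (hcop : Nat.Coprime p q) {α : ℝ}
    (hα : q * α ^ 2 = p) (hirr : Irrational α) {A : GL (Fin 2) ℤ} (hA : PosEigen α A 1) :
    A = 1 := by
  obtain ⟨a, b, hab⟩ := hA.exists_eq hq hcop hα hirr
  have h1 := hA.fst
  simp only [hab] at h1
  have key : ((a - 1 : ℤ) : ℝ) + ((q * b : ℤ) : ℝ) * α = 0 := by
    push_cast
    simp at h1
    linarith
  obtain ⟨k1, k2⟩ := hirr.int_eq_zero_of_add_mul_eq_zero key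
  have hb : b = 0 := by
    rcases mul_eq_zero.1 k2 with h | h
    · omega
    · exact h
  have ha : a = 1 := by linarith
  apply Units.ext
  rw [hab, ha, hb, Units.val_one, Matrix.one_fin_two]
  simp

/-- An element of norm `-1` exceeding `1` is at least the one given by the fundamental solution. -/
theorem le_of_det_neg_one {p q : ℕ} (hp : 0 < p) (hq : 0 < q) (hcop : Nat.Coprime p q) {α c : ℝ}
    (hα0 : 0 < α) (hα : q * α ^ 2 = p) (hirr : Irrational α) {x y : ℤ} (hx : 0 < x)
    (hpell : x ^ 2 - (p : ℤ) * q * y ^ 2 = -1)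
    (hmin : ∀ a b : ℤ, 0 < a → 0 < b → a ^ 2 - (p : ℤ) * q * b ^ 2 = -1 → x ≤ a)
    {A : GL (Fin 2) ℤ} (hA : PosEigen α A c) (hdet : A.1.det = -1) (hc : 1 < c) :
    x + q * y * α ≤ c := by
  obtain ⟨a, b, hab⟩ := hA.exists_eq hq hcop hα hirr
  have h1 := hA.fst
  rw [hab, Matrix.det_fin_two_of] at hdet
  rw [hab] at h1
  simp at h1
  have hab1 : a ^ 2 - (p : ℤ) * q * b ^ 2 = -1 := by linear_combination hdet
  have hab1R : (a : ℝ) ^ 2 - p * q * b ^ 2 = -1 := by exact_mod_cast hab1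
  have hqR : (0 : ℝ) < q := by exact_mod_cast hq
  have hδ : 0 < q * α := mul_pos hqR hα0
  -- The conjugate of `c` is `-1 / c`.
  have hconj : c * (a - q * b * α) = -1 := by
    rw [← h1]
    linear_combination hab1R - (q : ℝ) * b ^ 2 * hα
  have hneg : (a : ℝ) - q * b * α < 0 := by
    by_contra! h
    nlinarith [mul_nonneg hA.pos.le h]
  have hgt : -1 < (a : ℝ) - q * b * α := by nlinarith
  have ha : 0 < a := by
    have : (0 : ℝ) < a := by linarith
    exact_mod_cast this
  have hb : 0 < b := by
    have h : (0 : ℝ) < b * (q * α) := by linarith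
    exact_mod_cast pos_of_mul_pos_left h hδ.le
  have hxa := hmin a b ha hb hab1
  have hyb : y ≤ b := by
    have hN : (0 : ℤ) < (p : ℤ) * q := by positivity
    have : y ^ 2 ≤ b ^ 2 := by
      apply le_of_mul_le_mul_left _ hN
      nlinarith
    exact le_trans (le_abs_self y) (abs_le_of_sq_le_sq this hb.le)
  have hxaR : (x : ℝ) ≤ a := by exact_mod_cast hxa
  have hybR : (y : ℝ) ≤ b := by exact_mod_cast hyb
  nlinarith [mul_le_mul_of_nonneg_right hybR hδ.le]

end PosEigen

/-- Let `α = √(p/q)` be irrational with `gcd(p,q) = 1`, and suppose the negative Pell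
equation `x² − pqy² = −1` is solvable over the integers, with fundamental solution
`(x₁',y₁')`.  Then `A = [[m₁,n₁],[m₂,n₂]] ∈ GL(2,ℤ)` satisfies `m₁ + αn₁ > 0` and
`n₁α² + (m₁ − n₂)α − m₂ = 0` (equivalently, `π(A)` is an automorphism of `𝒜_α`)
if and only if `A = [[x₁', qy₁'],[py₁', x₁']]ⁿ` for some `n ∈ ℤ`. -/
theorem negPell_characterization_of_automorphisms
    (p q : ℕ) (hp : 0 < p) (hq : 0 < q) (hcop : Nat.Coprime p q)
    (α : ℝ) (hαdef : α = Real.sqrt ((p : ℝ) / (q : ℝ))) (hirr : Irrational α)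
    (x₁' y₁' : ℤ) (hx₁' : 0 < x₁') (hy₁' : 0 < y₁')
    (hpell : x₁' ^ 2 - (p : ℤ) * (q : ℤ) * y₁' ^ 2 = -1)
    (hmin : ∀ x y : ℤ, 0 < x → 0 < y → x ^ 2 - (p : ℤ) * (q : ℤ) * y ^ 2 = -1 → x₁' ≤ x)
    (M : GL (Fin 2) ℤ)
    (hM : (M : Matrix (Fin 2) (Fin 2) ℤ) = !![x₁', (q : ℤ) * y₁'; (p : ℤ) * y₁', x₁'])
    (A : GL (Fin 2) ℤ) (m₁ n₁ m₂ n₂ : ℤ)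
    (hA : (A : Matrix (Fin 2) (Fin 2) ℤ) = !![m₁, n₁; m₂, n₂]) :
    (0 < (m₁ : ℝ) + α * (n₁ : ℝ) ∧
      (n₁ : ℝ) * α ^ 2 + ((m₁ : ℝ) - (n₂ : ℝ)) * α - (m₂ : ℝ) = 0) ↔
    ∃ n : ℤ, A = M ^ n := by
  have hqR : (0 : ℝ) < q := by exact_mod_cast hq
  have hpR : (0 : ℝ) < p := by exact_mod_cast hp
  have hα0 : 0 < α := by rw [hαdef]; positivity
  have hα : q * α ^ 2 = p := by
    rw [hαdef, Real.sq_sqrt (by positivity)]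
    field_simp
  have hcond : (0 < (m₁ : ℝ) + α * (n₁ : ℝ) ∧
      (n₁ : ℝ) * α ^ 2 + ((m₁ : ℝ) - (n₂ : ℝ)) * α - (m₂ : ℝ) = 0) ↔ ∃ c, PosEigen α A c := by
    constructor
    · rintro ⟨h1, h2⟩
      refine ⟨_, h1, ?_, ?_⟩
      · rw [hA]
        simp
        ring
      · rw [hA]
        simp
        linear_combination -h2
    · rintro ⟨c, hc, h1, h2⟩
      rw [hA] at h1 h2
      simp at h1 h2
      exact ⟨by linarith, by linear_combination α * h1 - h2⟩
  rw [hcond]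
  set ε : ℝ := x₁' + q * y₁' * α with hε
  have hxR : (1 : ℝ) ≤ x₁' := by exact_mod_cast hx₁'
  have hyR : (0 : ℝ) < y₁' := by exact_mod_cast hy₁'
  have hε1 : 1 < ε := by
    have : 0 < q * y₁' * α := by positivity
    linarith
  have hMdet : M.1.det = -1 := by
    rw [hM, Matrix.det_fin_two_of]
    linear_combination hpell
  have hME : PosEigen α M ε := by
    refine ⟨by linarith, ?_, ?_⟩
    · rw [hM]
      simp [hε]
    · rw [hM]
      simp [hε]
      linear_combination -(y₁' : ℝ) * hα
  constructor
  · rintro ⟨c, hc⟩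
    obtain ⟨n, hn1, hn2⟩ := exists_mem_Ico_zpow hc.pos hε1
    refine ⟨n, ?_⟩
    have hB := hc.mul (hME.zpow n).inv
    set B := A * (M ^ n)⁻¹ with hBdef
    set d := c * (ε ^ n)⁻¹ with hd
    have hεn : 0 < ε ^ n := (hME.zpow n).pos
    have hd1 : 1 ≤ d := by rwa [hd, ← div_eq_mul_inv, one_le_div hεn]
    have hd2 : d < ε := by
      rw [hd, ← div_eq_mul_inv, div_lt_iff₀ hεn, mul_comm, ← zpow_add_one₀ hME.pos.ne']
      exact hn2
    suffices hB1 : B = 1 from mul_inv_eq_one.1 hB1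
    rcases hd1.eq_or_lt with h | h
    · rw [← h] at hB
      exact hB.eq_one hq hcop hα hirr
    · exfalso
      have hmin' {C : GL (Fin 2) ℤ} {e : ℝ} (hC : PosEigen α C e) (hdet : C.1.det = -1)
          (he : 1 < e) : ε ≤ e :=
        hC.le_of_det_neg_one hp hq hcop hα0 hα hirr hx₁' hpell hmin hdet he
      have hunit : IsUnit B.1.det := (Matrix.isUnit_iff_isUnit_det _).1 B.isUnit
      rcases Int.isUnit_iff.1 hunit with hdet | hdet
      · have hCdet : (M * B⁻¹).1.det = -1 := by
          have h1 : (M * B⁻¹).1.det * B.1.det = M.1.det := by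
            rw [← Matrix.det_mul, ← Units.val_mul, inv_mul_cancel_right]
          rwa [hdet, mul_one, hMdet] at h1
        have hle := hmin' (hME.mul hB.inv) hCdet
          (by rwa [← div_eq_mul_inv, one_lt_div hB.pos])
        rw [← div_eq_mul_inv, le_div_iff₀ hB.pos] at hle
        nlinarith
      · exact absurd (hmin' hB hdet h) (not_le.2 hd2)
  · rintro ⟨n, rfl⟩
    exact ⟨_, hME.zpow n⟩
end

section
/- Let α = r/s + k√(p/q) be a positive irrational, where r ∈ ℤ, p, q, s are positive integers, k ∈ {−1,1}, s is odd, gcd(r,s) = 1 and gcd(p,q) = 1, and √(p/q) is irrational. Let d₁ = gcd(ps² − qr², qs), so that pqs⁴/d₁² is a nonsquare positive integer. If the equation x² − (pqs⁴/d₁²) y² = −1 has no integer solutions, and (x₁,y₁) is the fundamental solution of x² − (pqs⁴/d₁²) y² = 1 (the pair of positive integers satisfying it with x₁ minimal), then a matrix A = [[m₁,n₁],[m₂,n₂]] ∈ GL(2,ℤ) satisfies m₁ + αn₁ > 0 and n₁α² + (m₁ − n₂)α − m₂ = 0 (equivalently, π(A) is an automorphism of 𝒜_α) if and only if A = [[−(qrs/d₁)y₁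 + x₁, (qs²/d₁)y₁],[((ps² − qr²)/d₁)y₁, (qrs/d₁)y₁ + x₁]]ⁿ for some n ∈ ℤ. -/
/-!
The quadratic condition says that `A` commutes with multiplication by `α`, so the admissible `A`
form (up to sign) the unit group of an order in `ℚ(α)`. Concretely, `α` is a root of
`e₂ X² - 2 e₁ X - e₃`, a *primitive* integer polynomial: `e₁, e₂, e₃` are coprime by the choice
of `d₁`, and the factor `2` is harmless because `s` is odd (`exists_bezout`). As `α` is
irrational, the quadratic condition on `A` then forces `A = x + t E` with `x, t ∈ ℤ` and
`E = [[-e₁, e₂], [e₃, e₁]]` (`exists_coordinates`). Since `E² = N`, these matrices multiply like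
`x + t √N`, with determinant `x² - N t²`; the latter is `1`, since `-1` is excluded by hypothesis.
So `A` is the image of a solution of Pell's equation under the homomorphism `Solution₁.toGL`.
Finally `m₁ + α n₁ = x + t u` with `u = e₂ α - e₁`, `u² = N`, is positive exactly when `x > 0`,
and the solutions with `x > 0` are the powers of the fundamental one.
-/

/-- The homomorphism `x + y √N ↦ x + y E` into integer matrices, for the matrix
`E = [[-e₁, e₂], [e₃, e₁]]` of square `N = e₁² + e₂ e₃`. -/
def Pell.Solution₁.toMatrix {N e₁ e₂ e₃ : ℤ} (h : e₁ ^ 2 + e₂ * e₃ = N) :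
    Pell.Solution₁ N →* Matrix (Fin 2) (Fin 2) ℤ where
  toFun a := !![-e₁ * a.y + a.x, e₂ * a.y; e₃ * a.y, e₁ * a.y + a.x]
  map_one' := by
    ext i j; fin_cases i <;> fin_cases j <;> simp
  map_mul' a b := by
    subst h
    ext i j
    fin_cases i <;> fin_cases j <;>
      simp [Matrix.mul_apply, Fin.sum_univ_two, Pell.Solution₁.x_mul, Pell.Solution₁.y_mul] <;> ring

/-- `Pell.Solution₁.toMatrix` with its values regarded as invertible matrices. -/
def Pell.Solution₁.toGL {N e₁ e₂ e₃ : ℤ} (h : e₁ ^ 2 + e₂ * e₃ = N) :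
    Pell.Solution₁ N →* GL (Fin 2) ℤ :=
  (Pell.Solution₁.toMatrix h).toHomUnits

theorem Pell.Solution₁.coe_toGL {N e₁ e₂ e₃ : ℤ} (h : e₁ ^ 2 + e₂ * e₃ = N)
    (a : Pell.Solution₁ N) :
    (Pell.Solution₁.toGL h a : Matrix (Fin 2) (Fin 2) ℤ) =
      !![-e₁ * a.y + a.x, e₂ * a.y; e₃ * a.y, e₁ * a.y + a.x] := rfl

/-- The polynomial `e₂ X² - 2 e₁ X - e₃` is primitive. -/
theorem exists_bezout {r e₁ e₂ e₃ d : ℤ} {p q s : ℕ} (hsodd : Odd s)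
    (hrs : Int.gcd r (s : ℤ) = 1) (hd0 : d ≠ 0)
    (hd : d = (Int.gcd ((p : ℤ) * s ^ 2 - (q : ℤ) * r ^ 2) ((q : ℤ) * s) : ℤ))
    (he₁ : e₁ * d = (q : ℤ) * r * (s : ℤ))
    (he₂ : e₂ * d = (q : ℤ) * (s : ℤ) ^ 2)
    (he₃ : e₃ * d = (p : ℤ) * (s : ℤ) ^ 2 - (q : ℤ) * r ^ 2) :
    ∃ a b c : ℤ, a * e₂ + b * (2 * e₁) + c * e₃ = 1 := by
  have hb := Int.gcd_eq_gcd_ab ((p : ℤ) * s ^ 2 - (q : ℤ) * r ^ 2) ((q : ℤ) * s)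
  have hb' := Int.gcd_eq_gcd_ab r (s : ℤ)
  rw [← hd] at hb
  rw [hrs] at hb'
  generalize Int.gcdA ((p : ℤ) * s ^ 2 - (q : ℤ) * r ^ 2) ((q : ℤ) * s) = u at hb
  generalize Int.gcdB ((p : ℤ) * s ^ 2 - (q : ℤ) * r ^ 2) ((q : ℤ) * s) = v at hb
  generalize Int.gcdA r (s : ℤ) = a at hb'
  generalize Int.gcdB r (s : ℤ) = b at hb'
  obtain ⟨j, hj⟩ := hsodd
  have hj' : (s : ℤ) = 2 * j + 1 := by exact_mod_cast hj
  have h1 : u * e₃ + v * a * e₁ + v * b * e₂ = 1 := by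
    apply mul_right_cancel₀ hd0
    push_cast at hb'
    linear_combination u * he₃ + v * a * he₁ + v * b * he₂ - hb - q * s * v * hb'
  have h2 : e₁ * s = e₂ * r := by
    apply mul_right_cancel₀ hd0
    linear_combination s * he₁ - r * he₂
  -- `s = 2 j + 1` and `e₁ s = e₂ r` give `e₁ = r e₂ - j (2 e₁)`.
  refine ⟨v * b + v * a * r, -(v * a * j), u, ?_⟩
  linear_combination h1 - v * a * h2 + v * a * e₁ * hj'

/-- Integer multiples of the minimal polynomial: a quadratic relation satisfied by the irrational
root `α` of a primitive polynomial is an integer multiple of that polynomial. -/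
theorem exists_coordinates {α : ℝ} (hirr : Irrational α) {e₁ e₂ e₃ m₁ n₁ m₂ n₂ : ℤ}
    (he : e₂ ≠ 0) (hbez : ∃ a b c : ℤ, a * e₂ + b * (2 * e₁) + c * e₃ = 1)
    (hα : (e₂ : ℝ) * α ^ 2 - 2 * e₁ * α - e₃ = 0)
    (h : (n₁ : ℝ) * α ^ 2 + ((m₁ : ℝ) - (n₂ : ℝ)) * α - (m₂ : ℝ) = 0) :
    ∃ x t : ℤ, m₁ = -e₁ * t + x ∧ n₁ = e₂ * t ∧ m₂ = e₃ * t ∧ n₂ = e₁ * t + x := by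
  obtain ⟨a, b, c, habc⟩ := hbez
  have hlin : ((e₂ * (m₁ - n₂) + 2 * n₁ * e₁ : ℤ) : ℝ) * α = ((e₂ * m₂ - n₁ * e₃ : ℤ) : ℝ) := by
    push_cast
    linear_combination e₂ * h - n₁ * hα
  have hc : e₂ * (m₁ - n₂) + 2 * n₁ * e₁ = 0 := by
    by_contra hne
    exact (hirr.intCast_mul hne).ne_int _ hlin
  have hc' : e₂ * m₂ - n₁ * e₃ = 0 := by
    rw [hc] at hlin
    have : ((e₂ * m₂ - n₁ * e₃ : ℤ) : ℝ) = 0 := by rw [← hlin]; simp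
    exact_mod_cast this
  obtain ⟨t, ht⟩ : ∃ t, t = a * n₁ + b * (n₂ - m₁) + c * m₂ := ⟨_, rfl⟩
  have hn₁ : n₁ = e₂ * t := by
    rw [ht]
    linear_combination -n₁ * habc + b * hc - c * hc'
  have hm₂ : m₂ = e₃ * t := by
    apply mul_left_cancel₀ he
    linear_combination hc' + e₃ * hn₁
  have hmn : n₂ - m₁ = 2 * e₁ * t := by
    apply mul_left_cancel₀ he
    linear_combination -hc + 2 * e₁ * hn₁
  exact ⟨m₁ + e₁ * t, t, by ring, hn₁, hm₂, by linear_combination hmn⟩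

/-- An element `x + t u` of norm `1` is positive exactly when its trace `2 x` is, its conjugate
being its inverse. -/
theorem pos_iff_of_norm_one {x t u : ℝ} (h : x ^ 2 - u ^ 2 * t ^ 2 = 1) :
    0 < x + t * u ↔ 0 < x := by
  have hmul : (x + t * u) * (x - t * u) = 1 := by linear_combination h
  constructor
  · intro hpos
    have := pos_of_mul_pos_right (hmul ▸ one_pos) hpos.le
    linarith
  · intro hx
    by_contra! hle
    nlinarith

/-- Let `α = r/s + k√(p/q)` be a positive irrational with `r ∈ ℤ`, `p, q, s` positive
integers, `k = ±1`, `s` odd, `gcd(r,s) = 1`, `gcd(p,q) = 1` and `√(p/q)` irrational.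
Set `d₁ = gcd(ps² − qr², qs)` and `N = pqs⁴/d₁²` (so `N` is a nonsquare positive integer).
If the equation `x² − Ny² = −1` has no integer solutions, and `(x₁,y₁)` is the fundamental
solution of `x² − Ny² = 1`, then `A = [[m₁,n₁],[m₂,n₂]] ∈ GL(2,ℤ)` satisfies
`m₁ + αn₁ > 0` and `n₁α² + (m₁ − n₂)α − m₂ = 0` (equivalently, `π(A)` is an automorphism
of `𝒜_α`) if and only if
`A = [[−(qrs/d₁)y₁ + x₁, (qs²/d₁)y₁],[((ps² − qr²)/d₁)y₁, (qrs/d₁)y₁ + x₁]]ⁿ`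
for some `n ∈ ℤ`. -/
theorem pell_characterization_of_automorphisms_quadratic
    (r : ℤ) (p q s : ℕ) (hp : 0 < p) (hq : 0 < q) (hs : 0 < s) (k : ℤ)
    (hk : k = 1 ∨ k = -1) (hsodd : Odd s)
    (hrs : Int.gcd r (s : ℤ) = 1) (hpq : Nat.Coprime p q)
    (hirr_sqrt : Irrational (Real.sqrt ((p : ℝ) / (q : ℝ))))
    (α : ℝ) (hαdef : α = (r : ℝ) / (s : ℝ) + (k : ℝ) * Real.sqrt ((p : ℝ) / (q : ℝ)))
    (hα : 0 < α) (hirr : Irrational α)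
    (d₁ : ℤ) (hd₁ : d₁ = (Int.gcd ((p : ℤ) * s ^ 2 - (q : ℤ) * r ^ 2) ((q : ℤ) * s) : ℤ))
    (N : ℤ) (hN : N * d₁ ^ 2 = (p : ℤ) * (q : ℤ) * (s : ℤ) ^ 4)
    (e₁ e₂ e₃ : ℤ)
    (he₁ : e₁ * d₁ = (q : ℤ) * r * (s : ℤ))
    (he₂ : e₂ * d₁ = (q : ℤ) * (s : ℤ) ^ 2)
    (he₃ : e₃ * d₁ = (p : ℤ) * (s : ℤ) ^ 2 - (q : ℤ) * r ^ 2)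
    (hneg : ¬ ∃ x y : ℤ, x ^ 2 - N * y ^ 2 = -1)
    (x₁ y₁ : ℤ) (hx₁ : 0 < x₁) (hy₁ : 0 < y₁)
    (hpell : x₁ ^ 2 - N * y₁ ^ 2 = 1)
    (hmin : ∀ x y : ℤ, 0 < x → 0 < y → x ^ 2 - N * y ^ 2 = 1 → x₁ ≤ x)
    (M : GL (Fin 2) ℤ)
    (hM : (M : Matrix (Fin 2) (Fin 2) ℤ) = !![-e₁ * y₁ + x₁, e₂ * y₁; e₃ * y₁, e₁ * y₁ + x₁])
    (A : GL (Fin 2) ℤ) (m₁ n₁ m₂ n₂ : ℤ)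
    (hA : (A : Matrix (Fin 2) (Fin 2) ℤ) = !![m₁, n₁; m₂, n₂]) :
    (0 < N ∧ ¬ IsSquare N) ∧
    ((0 < (m₁ : ℝ) + α * (n₁ : ℝ) ∧
      (n₁ : ℝ) * α ^ 2 + ((m₁ : ℝ) - (n₂ : ℝ)) * α - (m₂ : ℝ) = 0) ↔
    ∃ n : ℤ, A = M ^ n) := by
  have hs' : (0 : ℤ) < s := by exact_mod_cast hs
  have hq' : (0 : ℤ) < q := by exact_mod_cast hq
  have hp' : (0 : ℤ) < p := by exact_mod_cast hp
  have hd0 : d₁ ≠ 0 := by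
    rintro rfl
    have : (0 : ℤ) < q * s ^ 2 := by positivity
    simp [← he₂] at this
  have he0 : e₂ ≠ 0 := by
    rintro rfl
    have : (0 : ℤ) < q * s ^ 2 := by positivity
    simp [← he₂] at this
  have hNpos : 0 < N := by
    have h : 0 < N * d₁ ^ 2 := by rw [hN]; positivity
    exact pos_of_mul_pos_left h (sq_nonneg _)
  have hE : e₁ ^ 2 + e₂ * e₃ = N := by
    apply mul_right_cancel₀ (pow_ne_zero 2 hd0)
    linear_combination (e₁ * d₁ + q * r * s) * he₁ + (e₃ * d₁) * he₂ + q * s ^ 2 * he₃ - hN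
  have hx1 : 1 < x₁ := by
    have : 0 < N * y₁ ^ 2 := by positivity
    nlinarith
  have hfund : Pell.IsFundamental (Pell.Solution₁.mk x₁ y₁ hpell) := by
    refine ⟨hx1, hy₁, fun {b} hb => ?_⟩
    -- Minimality is only known for `y > 0`, so pass to `|y|`.
    have hby := Pell.Solution₁.y_ne_zero_of_one_lt_x hb
    refine hmin b.x |b.y| (by lia) (abs_pos.mpr hby) ?_
    rw [sq_abs]
    exact b.prop
  -- The minimal polynomial of `α`.
  have hquad : (e₂ : ℝ) * α ^ 2 - 2 * e₁ * α - e₃ = 0 := by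
    have hsR : (s : ℝ) ≠ 0 := by positivity
    have hqR : (q : ℝ) ≠ 0 := by positivity
    have hdR : (d₁ : ℝ) ≠ 0 := by exact_mod_cast hd0
    have h1 : (e₁ : ℝ) * d₁ = q * r * s := by exact_mod_cast he₁
    have h2 : (e₂ : ℝ) * d₁ = q * s ^ 2 := by exact_mod_cast he₂
    have h3 : (e₃ : ℝ) * d₁ = p * s ^ 2 - q * r ^ 2 := by exact_mod_cast he₃
    have hk2 : (k : ℝ) ^ 2 = 1 := by rcases hk with rfl | rfl <;> norm_num
    have hsq : √((p : ℝ) / q) ^ 2 * q = p := by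
      rw [Real.sq_sqrt (by positivity)]
      field_simp
    have hα' : s * α - r = s * (k * √((p : ℝ) / q)) := by
      rw [hαdef]
      field_simp
      ring
    have hα2 : q * (s * α - r) ^ 2 = p * s ^ 2 := by
      rw [hα']
      linear_combination s ^ 2 * (q * √((p : ℝ) / q) ^ 2) * hk2 + s ^ 2 * hsq
    apply mul_right_cancel₀ hdR
    linear_combination α ^ 2 * h2 - 2 * α * h1 - h3 + hα2
  have hu : (e₂ * α - e₁) ^ 2 = (N : ℝ) := by
    rw [← hE]
    push_cast
    linear_combination e₂ * hquad
  have hMφ : M = Pell.Solution₁.toGL hE (Pell.Solution₁.mk x₁ y₁ hpell) := by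
    apply Units.ext
    rw [hM, Pell.Solution₁.coe_toGL]
    rfl
  refine ⟨⟨hNpos, hfund.d_nonsquare⟩, ?_⟩
  constructor
  · rintro ⟨hpos, hrel⟩
    obtain ⟨x, t, hm₁, hn₁, hm₂, hn₂⟩ := exists_coordinates hirr he0
      (exists_bezout hsodd hrs hd0 hd₁ he₁ he₂ he₃) hquad hrel
    have hdet : x ^ 2 - N * t ^ 2 = 1 := by
      have hdetA : (A : Matrix (Fin 2) (Fin 2) ℤ).det = x ^ 2 - N * t ^ 2 := by
        rw [hA, Matrix.det_fin_two_of, hm₁, hn₁, hm₂, hn₂, ← hE]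
        ring
      have hunit : IsUnit (A : Matrix (Fin 2) (Fin 2) ℤ).det :=
        (Matrix.isUnit_iff_isUnit_det _).mp A.isUnit
      rw [hdetA, Int.isUnit_iff] at hunit
      exact hunit.resolve_right fun h => hneg ⟨x, t, h⟩
    have hx : 0 < x := by
      have hR : (x : ℝ) ^ 2 - (e₂ * α - e₁) ^ 2 * t ^ 2 = 1 := by
        rw [hu]
        exact_mod_cast hdet
      have : (0 : ℝ) < x := by
        rw [← pos_iff_of_norm_one hR]
        rw [hm₁, hn₁] at hpos
        push_cast at hpos
        linarith
      exact_mod_cast this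
    obtain ⟨n, hn | hn⟩ := hfund.eq_zpow_or_neg_zpow (Pell.Solution₁.mk x t hdet)
    · refine ⟨n, ?_⟩
      rw [hMφ, ← map_zpow, ← hn]
      apply Units.ext
      rw [hA, Pell.Solution₁.coe_toGL, hm₁, hn₁, hm₂, hn₂]
      rfl
    · exfalso
      have h1 := congrArg Pell.Solution₁.x hn
      have h2 := Pell.Solution₁.x_zpow_pos hfund.x_pos n
      rw [Pell.Solution₁.x_mk, Pell.Solution₁.x_neg] at h1
      lia
  · rintro ⟨n, rfl⟩
    have hx := Pell.Solution₁.x_zpow_pos hfund.x_pos n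
    rw [hMφ, ← map_zpow, Pell.Solution₁.coe_toGL] at hA
    generalize Pell.Solution₁.mk x₁ y₁ hpell ^ n = a at hA hx
    have hm₁ : -e₁ * a.y + a.x = m₁ := congrFun (congrFun hA 0) 0
    have hn₁ : e₂ * a.y = n₁ := congrFun (congrFun hA 0) 1
    have hm₂ : e₃ * a.y = m₂ := congrFun (congrFun hA 1) 0
    have hn₂ : e₁ * a.y + a.x = n₂ := congrFun (congrFun hA 1) 1
    rw [← hm₁, ← hn₁, ← hm₂, ← hn₂]
    push_cast
    constructor
    · have hR : (a.x : ℝ) ^ 2 - (e₂ * α - e₁) ^ 2 * a.y ^ 2 = 1 := by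
        rw [hu]
        exact_mod_cast a.prop
      have := (pos_iff_of_norm_one hR).mpr (by exact_mod_cast hx)
      linarith
    · linear_combination a.y * hquad
end
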